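/- arXiv:1911.07807 — 9 statements merged into one kernel-verified Lean document; each statement's English description precedes it below -/
import Mathlib

section
/- Let G be a group, let G₁ be a subgroup of finite index in G, and let H be a subgroup of G such that H ∩ G₁ has finite height in G₁. Then H has finite height in G. -/
/-!
If `G₁` has index `m` in `G` and `H ∩ G₁` has height at most `n` in `G₁`, then `H` has height at
most `m * n` in `G`. Indeed, among `m * n + 1` elements of `G`, some `n + 1` lie in a common left
coset `t G₁`; write them as `t aⱼ` with `aⱼ ∈ G₁`. The `aⱼ` represent distinct cosets of `H ∩ G₁`
when the `t aⱼ` represent distinct cosets of `H`. Up to conjugation by `t`, the intersection of the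
conjugates of `H` is contained in `K = ⋂ⱼ aⱼ H aⱼ⁻¹`, and `K ∩ G₁ = ⋂ⱼ aⱼ (H ∩ G₁) aⱼ⁻¹` is finite
by assumption. Since `G₁` has finite index, `K` itself is finite.
-/

/-- The conjugate subgroup `g H g⁻¹`. -/
def conjSubgroup {G : Type*} [Group G] (g : G) (H : Subgroup G) : Subgroup G :=
  Subgroup.map (MulAut.conj g).toMonoidHom H

/-- `H` has height at most `n` in `G`: for any `n + 1` elements of `G` representing pairwise
distinct left cosets of `H`, the intersection of the corresponding conjugates of `H` is
finite. -/
def HeightLE {G : Type*} [Group G] (H : Subgroup G) (n : ℕ) : Prop :=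
  ∀ g : Fin (n + 1) → G,
    (∀ i j, i ≠ j → (g i)⁻¹ * g j ∉ H) →
    (((⨅ i, conjSubgroup (g i) H) : Subgroup G) : Set G).Finite

/-- `H` has finite height in `G`: it has height at most `n` for some `n`. -/
def FiniteHeight {G : Type*} [Group G] (H : Subgroup G) : Prop :=
  ∃ n : ℕ, HeightLE H n

theorem mem_conjSubgroup {G : Type*} [Group G] (g x : G) (H : Subgroup G) :
    x ∈ conjSubgroup g H ↔ g⁻¹ * x * g ∈ H := by
  unfold conjSubgroup
  constructor
  · rintro ⟨y, hy, rfl⟩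
    simpa [mul_assoc] using hy
  · intro hx
    exact ⟨_, hx, by simp [mul_assoc]⟩

theorem finite_of_inf_finiteIndex {G : Type*} [Group G] (K G₁ : Subgroup G)
    (hG₁ : G₁.FiniteIndex) (h : ((K ⊓ G₁ : Subgroup G) : Set G).Finite) : (K : Set G).Finite := by
  -- The map `K → G ⧸ G₁` has finite target, and each of its fibres is a translate of `K ∩ G₁`.
  refine Set.Finite.of_finite_fibers (fun x : G => (x : G ⧸ G₁)) (Set.toFinite _) ?_
  rintro _ ⟨x, hx, rfl⟩
  refine (h.image (fun y => x * y)).subset ?_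
  rintro y ⟨hy, hyx⟩
  refine ⟨x⁻¹ * y, ⟨K.mul_mem (K.inv_mem hx) hy, QuotientGroup.eq.1 ?_⟩, by simp⟩
  exact hyx.symm

/-- If `H ∩ G₁` has height at most `n` in the finite index subgroup `G₁`, then `n + 1` elements of
`G₁` which represent distinct cosets of `H` give conjugates of `H` with finite intersection. -/
theorem finite_iInf_conj_of_mem {G : Type*} [Group G] (G₁ H : Subgroup G)
    (hG₁ : G₁.FiniteIndex) {n : ℕ} (h : HeightLE (H.subgroupOf G₁) n) (a : Fin (n + 1) → G₁)
    (ha : ∀ i j, i ≠ j → (a i : G)⁻¹ * a j ∉ H) :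
    ((⨅ i, conjSubgroup (a i : G) H : Subgroup G) : Set G).Finite := by
  refine finite_of_inf_finiteIndex _ G₁ hG₁ ?_
  have hfin := h a (fun i j hij hmem => ha i j hij (by simpa [Subgroup.mem_subgroupOf] using hmem))
  refine (hfin.image (Subtype.val)).subset ?_
  intro x hxK
  obtain ⟨hx, hx₁⟩ := Subgroup.mem_inf.1 hxK
  refine ⟨⟨x, hx₁⟩, ?_, rfl⟩
  simp only [SetLike.mem_coe, Subgroup.mem_iInf, mem_conjSubgroup] at hx ⊢
  intro i
  simpa [Subgroup.mem_subgroupOf] using hx i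

/-- If `G₁` has finite index in `G` and `H ∩ G₁` has finite height in `G₁`, then `H` has
finite height in `G`. -/
theorem finiteHeight_of_subgroupOf_finiteIndex {G : Type*} [Group G]
    (G₁ H : Subgroup G) (hG₁ : G₁.FiniteIndex)
    (h : FiniteHeight (H.subgroupOf G₁)) : FiniteHeight H := by
  classical
  obtain ⟨n, hn⟩ := h
  have : Fintype (G ⧸ G₁) := Fintype.ofFinite _
  refine ⟨Fintype.card (G ⧸ G₁) * n, fun g hg => ?_⟩
  obtain ⟨q, hq⟩ := Fintype.exists_lt_card_fiber_of_mul_lt_card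
    (fun i => (g i : G ⧸ G₁)) (n := n) (by simp)
  let e := Finset.orderEmbOfCardLe _ (Nat.succ_le_of_lt hq)
  have he : ∀ j, (g (e j) : G ⧸ G₁) = q := fun j => by
    simpa using Finset.orderEmbOfCardLe_mem _ (Nat.succ_le_of_lt hq) j
  obtain ⟨t, rfl⟩ := QuotientGroup.mk_surjective q
  let a : Fin (n + 1) → G₁ := fun j => ⟨t⁻¹ * g (e j), QuotientGroup.eq.1 (he j).symm⟩
  have hK := finite_iInf_conj_of_mem G₁ H hG₁ hn a (fun i j hij hmem =>
    hg (e i) (e j) (e.injective.ne hij) (by simpa [a, mul_assoc] using hmem))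
  refine (hK.image (fun x => t * x * t⁻¹)).subset fun x hx => ?_
  refine ⟨t⁻¹ * x * t, ?_, by simp [mul_assoc]⟩
  simp only [SetLike.mem_coe, Subgroup.mem_iInf, mem_conjSubgroup] at hx ⊢
  intro j
  simpa [a, mul_assoc] using hx (e j)
end

section
/- Let G be a group and let H₁ and H₂ be two subgroups of G, each having finite height in G. Then the intersection H₁ ∩ H₂ has finite height in G, has finite height in H₁, and has finite height in H₂. -/
theorem conjSubgroup_mono {G : Type*} [Group G] (g : G) {H K : Subgroup G} (h : H ≤ K) :
    conjSubgroup g H ≤ conjSubgroup g K :=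
  Subgroup.map_mono h

/-- The form in which a height bound is applied: if a family `g`, possibly with repeated cosets,
has `n + 1` members in distinct cosets of `H`, then the conjugates by `g` of any `K ≤ H` meet in a
finite subgroup. -/
theorem HeightLE.finite_of_le {G ι : Type*} [Group G] {H K : Subgroup G} {n : ℕ}
    (hH : HeightLE H n) (hK : K ≤ H) (g : ι → G) (e : Fin (n + 1) → ι)
    (he : ∀ i j, i ≠ j → (g (e i))⁻¹ * g (e j) ∉ H) :
    (((⨅ i, conjSubgroup (g i) K) : Subgroup G) : Set G).Finite := by
  refine (hH (fun i => g (e i)) he).subset ?_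
  have : (⨅ i, conjSubgroup (g i) K) ≤ ⨅ i, conjSubgroup (g (e i)) H :=
    le_iInf fun i => (iInf_le _ (e i)).trans (conjSubgroup_mono _ hK)
  exact this

theorem HeightLE.inf {G : Type*} [Group G] {H₁ H₂ : Subgroup G} {n₁ n₂ : ℕ}
    (h₁ : HeightLE H₁ n₁) (h₂ : HeightLE H₂ n₂) : HeightLE (H₁ ⊓ H₂) (n₁ * n₂) := by
  classical
  intro g hg
  let f : Fin (n₁ * n₂ + 1) → G ⧸ H₁ := fun i => (g i : G ⧸ H₁)
  by_cases hc : n₁ < (Finset.univ.image f).card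
  · obtain ⟨u⟩ : Nonempty (Fin (n₁ + 1) ↪ Finset.univ.image f) :=
      Function.Embedding.nonempty_of_card_le (by simpa using hc)
    have hu : ∀ k, ∃ i, f i = u k := fun k => by
      simpa only [Finset.mem_image, Finset.mem_univ, true_and] using (u k).2
    choose e he using hu
    refine h₁.finite_of_le inf_le_left g e fun i j hij hmem => hij (u.injective ?_)
    apply Subtype.ext
    rw [← he, ← he]
    exact QuotientGroup.eq.2 hmem
  · obtain ⟨y, -, hy⟩ := Finset.exists_lt_card_fiber_of_mul_lt_card_of_maps_to
      (s := Finset.univ) (t := Finset.univ.image f) (f := f) (n := n₂)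
      (fun i _ => Finset.mem_image_of_mem f (Finset.mem_univ i))
      (by
        have := Nat.mul_le_mul_right n₂ (not_lt.1 hc)
        simp only [Finset.card_univ, Fintype.card_fin]
        omega)
    obtain ⟨u⟩ : Nonempty (Fin (n₂ + 1) ↪ Finset.univ.filter fun i => f i = y) :=
      Function.Embedding.nonempty_of_card_le (by
        rw [Fintype.card_fin, Fintype.card_coe]; exact hy)
    have hu : ∀ k, f (u k) = y := fun k => (Finset.mem_filter.1 (u k).2).2
    refine h₂.finite_of_le inf_le_right g (fun k => u k) fun i j hij hmem => ?_
    refine hg (u i) (u j) (fun h => hij (u.injective (Subtype.ext h))) ⟨?_, hmem⟩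
    exact QuotientGroup.eq.1 ((hu i).trans (hu j).symm)

theorem HeightLE.subgroupOf {G : Type*} [Group G] {K : Subgroup G} {n : ℕ}
    (hK : HeightLE K n) (L : Subgroup G) : HeightLE (K.subgroupOf L) n := by
  intro g hg
  refine Set.Finite.of_finite_image (f := ((↑) : L → G)) ?_ Subtype.val_injective.injOn
  refine (hK (fun i => (g i : G)) fun i j hij hmem => hg i j hij hmem).subset ?_
  rintro _ ⟨x, hx, rfl⟩
  simp only [SetLike.mem_coe, Subgroup.mem_iInf] at hx ⊢
  intro i
  obtain ⟨k, hk, hkx⟩ := hx i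
  exact ⟨k, hk, congrArg Subtype.val hkx⟩

/-- If `H₁` and `H₂` both have finite height in `G`, then `H₁ ⊓ H₂` has finite height in
`G`, in `H₁`, and in `H₂`. -/
theorem finiteHeight_inf {G : Type*} [Group G] (H₁ H₂ : Subgroup G)
    (h₁ : FiniteHeight H₁) (h₂ : FiniteHeight H₂) :
    FiniteHeight (H₁ ⊓ H₂) ∧ FiniteHeight ((H₁ ⊓ H₂).subgroupOf H₁) ∧
      FiniteHeight ((H₁ ⊓ H₂).subgroupOf H₂) := by
  obtain ⟨n₁, h₁⟩ := h₁
  obtain ⟨n₂, h₂⟩ := h₂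
  have h := HeightLE.inf h₁ h₂
  exact ⟨⟨_, h⟩, ⟨_, h.subgroupOf H₁⟩, ⟨_, h.subgroupOf H₂⟩⟩
end

section
/- Let G be a group whose center Z(G) is infinite, and let H be an infinite subgroup of G that has finite height in G. Then H has finite index in G. -/
/-- Under a height bound, the elements `g` for which `g H g⁻¹` contains a fixed infinite set `K`
represent only finitely many cosets of `H`. -/
theorem HeightLE.finite_image_mk {G : Type*} [Group G] {H : Subgroup G} {n : ℕ}
    (h : HeightLE H n) {S K : Set G} (hK : K.Infinite)
    (hSK : ∀ g ∈ S, K ⊆ conjSubgroup g H) :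
    ((fun g : G => (g : G ⧸ H)) '' S).Finite := by
  by_contra hS
  have e := Set.Infinite.natEmbedding _ hS
  choose g hgS hg using fun i : Fin (n + 1) => (e i).2
  refine hK ((h g ?_).subset ?_)
  · intro i j hij hmem
    have hc : (g i : G ⧸ H) = g j := QuotientGroup.eq.mpr hmem
    have he : e i = e j := Subtype.ext ((hg i).symm.trans (hc.trans (hg j)))
    exact hij (Fin.ext (e.injective he))
  · intro k hk
    simp only [SetLike.mem_coe, Subgroup.mem_iInf]
    exact fun i => hSK _ (hgS i) hk

theorem mem_conjSubgroup_of_commute {G : Type*} [Group G] {H : Subgroup G} {g k : G}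
    (hk : k ∈ H) (hgk : g * k = k * g) : k ∈ conjSubgroup g H :=
  Subgroup.mem_map.mpr ⟨k, hk, by simp [hgk]⟩

/-- If the center of `G` is infinite and `H` is an infinite subgroup of `G` of finite
height, then `H` has finite index in `G`. -/
theorem finiteIndex_of_finiteHeight_of_infinite_center {G : Type*} [Group G]
    (H : Subgroup G) (hZ : (Subgroup.center G : Set G).Infinite)
    (hHinf : (H : Set G).Infinite) (hfh : FiniteHeight H) : H.FiniteIndex := by
  obtain ⟨n, hn⟩ := hfh
  have hZfin := hn.finite_image_mk (S := (Subgroup.center G : Set G)) hHinf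
    fun g hg k hk => mem_conjSubgroup_of_commute hk (Subgroup.mem_center_iff.mp hg k).symm
  have hZH : ((Subgroup.center G : Set G) ∩ H).Infinite := by
    intro hfin
    refine hZ (Set.Finite.of_finite_fibers _ hZfin ?_)
    rintro _ ⟨z, hz, rfl⟩
    -- the part of `Z` in the coset `zH` is the translate `z (Z ∩ H)`
    refine (hfin.image (z * ·)).subset ?_
    rintro w ⟨hw, hwz⟩
    exact ⟨z⁻¹ * w, ⟨mul_mem (inv_mem hz) hw, QuotientGroup.eq.mp (Eq.symm hwz)⟩, by simp⟩
  have huniv := hn.finite_image_mk (S := Set.univ) hZH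
    fun g _ k hk => mem_conjSubgroup_of_commute hk.2 (Subgroup.mem_center_iff.mp hk.1 g)
  rw [Set.image_univ, Set.range_eq_univ.mpr QuotientGroup.mk_surjective] at huniv
  have : Finite (G ⧸ H) := Set.finite_univ_iff.mp huniv
  exact Subgroup.finiteIndex_of_finite_quotient
end

section
/- Let G be a group whose center Z(G) is infinite, and let H be an infinite subgroup of G that has finite height in G. Then H ∩ Z(G) has finite index in Z(G). -/
/-- If the center of `G` is infinite and `H` is an infinite subgroup of `G` of finite
height, then `H ∩ Z(G)` has finite index in `Z(G)`. -/
theorem inf_center_finiteIndex_of_finiteHeight {G : Type*} [Group G]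
    (H : Subgroup G) (hZ : (Subgroup.center G : Set G).Infinite)
    (hHinf : (H : Set G).Infinite) (hfh : FiniteHeight H) :
    (H.subgroupOf (Subgroup.center G)).FiniteIndex := by
  obtain ⟨n, hn⟩ := hfh
  by_contra hfin
  have hinf : Infinite (Subgroup.center G ⧸ H.subgroupOf (Subgroup.center G)) := by
    by_contra h
    rw [not_infinite_iff_finite] at h
    exact hfin Subgroup.finiteIndex_of_finite_quotient
  obtain ⟨f⟩ : Nonempty (Fin (n + 1) ↪ Subgroup.center G ⧸ H.subgroupOf (Subgroup.center G)) :=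
    ⟨Fin.valEmbedding.trans (Infinite.natEmbedding _)⟩
  refine hHinf ((hn (fun i => ((f i).out : Subgroup.center G)) ?_).subset ?_)
  · intro i j hij hmem
    refine hij (f.injective ?_)
    rw [← QuotientGroup.out_eq' (f i), ← QuotientGroup.out_eq' (f j), QuotientGroup.eq]
    exact hmem
  · intro x hx
    simp only [SetLike.mem_coe, Subgroup.mem_iInf]
    intro i
    refine ⟨x, hx, ?_⟩
    -- conjugation by a central element fixes `x`
    have hc := Subgroup.mem_center_iff.mp (f i).out.2 x
    simp [← hc]
end

section
/- Let G be a group and suppose there is a collection 𝒜 of subgroups of G satisfying: (1) for each A in 𝒜 and each g in G the conjugate g⁻¹Ag also belongs to 𝒜, and there is a finite sequence A = A₀, A₁, …, A_n = g⁻¹Ag of subgroups in 𝒜 such that A_{j−1} ∩ A_j is infinite for each j ∈ {1,…,n}; (2) for each A in 𝒜, every subgroup of A that has finite height in A is either finite or of finite index in A. Then for every subgroup H of G that has infinite index in G and finite height in G, the intersection H ∩ A is finite for all A in 𝒜. -/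
theorem finiteHeight_subgroupOf {G : Type*} [Group G] {H : Subgroup G} (A : Subgroup G)
    (hH : FiniteHeight H) : FiniteHeight (H.subgroupOf A) := by
  obtain ⟨n, hn⟩ := hH
  refine ⟨n, fun g hg => ?_⟩
  have hfin := hn (fun i => (g i : G)) fun i j hij hmem => hg i j hij hmem
  refine Set.Finite.of_finite_image (f := ((↑) : A → G)) (hfin.subset ?_)
    Subtype.val_injective.injOn
  rintro _ ⟨a, ha, rfl⟩
  simp only [SetLike.mem_coe, Subgroup.mem_iInf, mem_conjSubgroup] at ha ⊢
  exact fun i => ha i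

/-- A finite-index subgroup of an infinite group is infinite. -/
theorem infinite_inf_of_relIndex_ne_zero {G : Type*} [Group G] {H A : Subgroup G}
    (hA : (A : Set G).Infinite) (h : H.relIndex A ≠ 0) :
    ((H ⊓ A : Subgroup G) : Set G).Infinite := by
  intro hfin
  have : Finite (H ⊓ A : Subgroup G) := hfin
  have hne : (⊥ : Subgroup G).relIndex A ≠ 0 := by
    rw [← Subgroup.relIndex_mul_relIndex ⊥ (H ⊓ A) A bot_le inf_le_right,
      Subgroup.inf_relIndex_right, Subgroup.relIndex_bot_left]
    exact mul_ne_zero Nat.card_pos.ne' h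
  rw [Subgroup.relIndex_bot_left] at hne
  exact hA (Nat.finite_of_card_ne_zero hne)

theorem relIndex_ne_zero_of_infinite_inf {G : Type*} [Group G] {H A : Subgroup G}
    (hA : ∀ B : Subgroup A, FiniteHeight B → ((B : Subgroup A) : Set A).Finite ∨ B.FiniteIndex)
    (hH : FiniteHeight H) (hinf : ((H ⊓ A : Subgroup G) : Set G).Infinite) :
    H.relIndex A ≠ 0 := by
  rcases hA _ (finiteHeight_subgroupOf A hH) with hfin | hidx
  · refine absurd ((hfin.image ((↑) : A → G)).subset ?_) hinf
    rintro x ⟨hxH, hxA⟩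
    exact ⟨⟨x, hxA⟩, hxH, rfl⟩
  · exact hidx.index_ne_zero

theorem relIndex_conjSubgroup {G : Type*} [Group G] (g : G) (H A : Subgroup G) :
    (conjSubgroup g H).relIndex A = H.relIndex (conjSubgroup g⁻¹ A) := by
  have hA : A = conjSubgroup g (conjSubgroup g⁻¹ A) := by
    ext x
    simp [mem_conjSubgroup, mul_assoc]
  conv_lhs => rw [hA]
  exact Subgroup.relIndex_map_map_of_injective _ _ (MulAut.conj g).injective

/-- Suppose `𝒜` is a collection of subgroups of `G` such that (1) for `A ∈ 𝒜` and
`g ∈ G` the conjugate `g⁻¹ A g` is in `𝒜` and is connected to `A` by a finite chain of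
members of `𝒜` with consecutive infinite intersections, and (2) every finite-height
subgroup of each `A ∈ 𝒜` is finite or of finite index in `A`. Then every infinite-index
finite-height subgroup `H` of `G` meets each `A ∈ 𝒜` in a finite set. -/
theorem finite_inter_of_finiteHeight_of_collection {G : Type*} [Group G]
    (𝒜 : Set (Subgroup G))
    (h1 : ∀ A ∈ 𝒜, ∀ g : G, conjSubgroup g⁻¹ A ∈ 𝒜 ∧
      ∃ (n : ℕ) (f : Fin (n + 1) → Subgroup G), (∀ i, f i ∈ 𝒜) ∧ f 0 = A ∧
        f (Fin.last n) = conjSubgroup g⁻¹ A ∧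
        ∀ i : Fin n, (((f i.castSucc ⊓ f i.succ) : Subgroup G) : Set G).Infinite)
    (h2 : ∀ A ∈ 𝒜, ∀ B : Subgroup A, FiniteHeight B →
      ((B : Subgroup A) : Set A).Finite ∨ B.FiniteIndex)
    (H : Subgroup G) (hidx : H.index = 0) (hfh : FiniteHeight H) :
    ∀ A ∈ 𝒜, (((H ⊓ A) : Subgroup G) : Set G).Finite := by
  intro A hA
  by_contra hHA
  have hAinf : (A : Set G).Infinite := Set.Infinite.mono (fun x hx => hx.2) hHA
  have hconj : ∀ g : G, (conjSubgroup g H).relIndex A ≠ 0 := by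
    intro g
    obtain ⟨-, n, f, hf, hf0, hfn, hstep⟩ := h1 A hA g
    have hchain : ∀ i, ((H ⊓ f i : Subgroup G) : Set G).Infinite := by
      intro i
      induction i using Fin.induction with
      | zero => rw [hf0]; exact hHA
      | succ i ih =>
        have hrel := relIndex_ne_zero_of_infinite_inf (h2 _ (hf _)) hfh ih
        have hrel' : H.relIndex (f i.castSucc ⊓ f i.succ) ≠ 0 :=
          mt (Subgroup.relIndex_eq_zero_of_le_right inf_le_left) hrel
        exact (infinite_inf_of_relIndex_ne_zero (hstep i) hrel').mono
          fun x hx => ⟨hx.1, hx.2.2⟩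
    rw [relIndex_conjSubgroup, ← hfn]
    exact relIndex_ne_zero_of_infinite_inf (h2 _ (hf _)) hfh (hchain _)
  obtain ⟨n, hn⟩ := hfh
  have : Infinite (G ⧸ H) := Subgroup.index_eq_zero_iff_infinite.mp hidx
  let c : ℕ ↪ G ⧸ H := Infinite.natEmbedding _
  let g : Fin (n + 1) → G := fun i => (c i).out
  have hg : ∀ i j, i ≠ j → (g i)⁻¹ * g j ∉ H := by
    intro i j hij hmem
    rw [← QuotientGroup.eq, QuotientGroup.out_eq', QuotientGroup.out_eq'] at hmem
    exact hij (Fin.ext (c.injective hmem))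
  have hrel : (⨅ i, conjSubgroup (g i) H).relIndex A ≠ 0 :=
    Subgroup.relIndex_iInf_ne_zero fun i => hconj (g i)
  exact infinite_inf_of_relIndex_ne_zero hAinf hrel ((hn g hg).subset fun x hx => hx.1)
end

section
/- Let k ≥ 1 be an integer, let Φ be a group automorphism of ℤ^k, and let G = ℤ^k ⋊_Φ ℤ. Let H be a nontrivial subgroup of G that has infinite index in G and has finite height in G. Then H ∩ ℤ^k is trivial and H is an infinite cyclic subgroup generated by an element t^m z with m a positive integer and z ∈ ℤ^k; in particular the generator of H has nonzero image under the projection G → ℤ. -/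
/-- The action of `ℤ` on `ℤ^k` induced by an automorphism `Φ` of `ℤ^k`, giving rise to the
semidirect product `ℤ^k ⋊[Φ] ℤ` (written multiplicatively): the generator `t` of `ℤ` acts by
`t z t⁻¹ = Φ z`. -/
def zdAction {k : ℕ} (Φ : AddAut (Fin k → ℤ)) :
    Multiplicative ℤ →* MulAut (Multiplicative (Fin k → ℤ)) :=
  zpowersHom _ (AddEquiv.toMultiplicative Φ)

/-- Under height at most `n`, an element of infinite order misses one of any `n + 1` essentially
distinct conjugates, since otherwise their intersection contains all of its powers. -/
lemma HeightLE.exists_not_mem {G : Type*} [Group G] {H : Subgroup G} {n : ℕ} (h : HeightLE H n)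
    (g : Fin (n + 1) → G) (hg : ∀ i j, i ≠ j → (g i)⁻¹ * g j ∉ H)
    {x : G} (hx : ¬ IsOfFinOrder x) : ∃ i, (g i)⁻¹ * x * g i ∉ H := by
  by_contra! hall
  have hmem : x ∈ (⨅ i, conjSubgroup (g i) H : Subgroup G) := by
    rw [Subgroup.mem_iInf]
    intro i
    exact ⟨(g i)⁻¹ * x * g i, hall i, by simp [mul_assoc]⟩
  refine (infinite_zpowers.mpr hx) ((h g hg).subset ?_)
  exact_mod_cast (Subgroup.zpowers_le.mpr hmem)

/-- A subgroup of infinite index has any finite number of pairwise distinct cosets. -/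
lemma exists_distinct_cosets {G : Type*} [Group G] {H : Subgroup G} (h : H.index = 0) (n : ℕ) :
    ∃ g : Fin n → G, ∀ i j, i ≠ j → (g i)⁻¹ * g j ∉ H := by
  have : Infinite (G ⧸ H) := Subgroup.index_eq_zero_iff_infinite.mp h
  let e := Infinite.natEmbedding (G ⧸ H)
  refine ⟨fun i => (e i).out, fun i j hij hmem => hij ?_⟩
  have := QuotientGroup.eq.mpr hmem
  simp only [QuotientGroup.out_eq'] at this
  exact Fin.ext (e.injective this)

/-- A finite-height subgroup of infinite index meets a torsion-free abelian normal subgroup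
trivially; the normal subgroup is given as the range of `f`. -/
lemma FiniteHeight.inf_range_eq_bot {G B : Type*} [Group G] [CommGroup B] [IsMulTorsionFree B]
    {H : Subgroup G} (hfh : FiniteHeight H) (hidx : H.index = 0) (f : B →* G)
    (hf : Function.Injective f) [f.range.Normal] : H ⊓ f.range = ⊥ := by
  obtain ⟨n, hn⟩ := hfh
  rw [Subgroup.eq_bot_iff_forall]
  rintro _ ⟨hxH, x, rfl⟩
  by_contra hne
  have hx : x ≠ 1 := by rintro rfl; exact hne (map_one f)
  by_cases hd : (H.comap f).index = 0
  · obtain ⟨g, hg⟩ := exists_distinct_cosets hd (n + 1)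
    obtain ⟨i, hi⟩ := hn.exists_not_mem (fun i => f (g i))
      (fun i j hij hmem => hg i j hij (by simpa using hmem)) (x := f x)
      (by rw [hf.isOfFinOrder_iff]; exact not_isOfFinOrder_of_isMulTorsionFree hx)
    apply hi
    rw [← map_inv, ← map_mul, ← map_mul, mul_right_comm, inv_mul_cancel, one_mul]
    exact hxH
  · obtain ⟨g, hg⟩ := exists_distinct_cosets hidx (n + 1)
    obtain ⟨i, hi⟩ := hn.exists_not_mem g hg (x := f (x ^ (H.comap f).index))
      (by
        rw [hf.isOfFinOrder_iff]
        refine not_isOfFinOrder_of_isMulTorsionFree fun h => hx ?_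
        exact (pow_eq_one_iff_left hd).mp h)
    apply hi
    -- Conjugation by `g i` commutes with taking powers and preserves the range of `f`.
    obtain ⟨y, hy⟩ : (g i)⁻¹ * f x * g i ∈ f.range := by
      simpa using ‹f.range.Normal›.conj_mem (f x) ⟨x, rfl⟩ (g i)⁻¹
    have hpow : (g i)⁻¹ * f (x ^ (H.comap f).index) * g i = f (y ^ (H.comap f).index) := by
      have := conj_pow (a := (g i)⁻¹) (b := f x) (i := (H.comap f).index)
      rw [inv_inv] at this
      rw [map_pow, map_pow, hy, this]
    rw [hpow]
    exact Subgroup.pow_index_mem (H.comap f) y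

/-- In `G = ℤ^k ⋊[Φ] ℤ`, every nontrivial finite-height subgroup of infinite index meets
`ℤ^k` trivially and is the infinite cyclic subgroup generated by an element `t^m z` with
`m > 0` and `z ∈ ℤ^k`; in particular its generator has nonzero image in `ℤ`. -/
theorem finiteHeight_subgroup_of_abelianByCyclic (k : ℕ) (hk : 1 ≤ k)
    (Φ : AddAut (Fin k → ℤ))
    (H : Subgroup (Multiplicative (Fin k → ℤ) ⋊[zdAction Φ] Multiplicative ℤ))
    (hbot : H ≠ ⊥) (hidx : H.index = 0) (hfh : FiniteHeight H) :
    H ⊓ (SemidirectProduct.inl :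
        Multiplicative (Fin k → ℤ) →* _).range = ⊥ ∧
    ∃ (m : ℤ) (z : Fin k → ℤ), 0 < m ∧
      H = Subgroup.zpowers (SemidirectProduct.inr (Multiplicative.ofAdd m) *
        SemidirectProduct.inl (Multiplicative.ofAdd z)) ∧
      SemidirectProduct.rightHom (SemidirectProduct.inr (Multiplicative.ofAdd m) *
        SemidirectProduct.inl (Multiplicative.ofAdd z) :
        Multiplicative (Fin k → ℤ) ⋊[zdAction Φ] Multiplicative ℤ) ≠ 1 := by
  have hker : (SemidirectProduct.inl : Multiplicative (Fin k → ℤ) →*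
      Multiplicative (Fin k → ℤ) ⋊[zdAction Φ] Multiplicative ℤ).range =
      SemidirectProduct.rightHom.ker := SemidirectProduct.range_inl_eq_ker_rightHom
  have : (SemidirectProduct.inl : Multiplicative (Fin k → ℤ) →*
      Multiplicative (Fin k → ℤ) ⋊[zdAction Φ] Multiplicative ℤ).range.Normal := by
    rw [hker]; infer_instance
  have htriv := hfh.inf_range_eq_bot hidx _
    (SemidirectProduct.inl_injective (φ := zdAction Φ))
  refine ⟨htriv, ?_⟩
  have hone : ∀ x ∈ H, SemidirectProduct.rightHom x = 1 → x = 1 := fun x hx h1 => by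
    have hmem : x ∈ H ⊓ (SemidirectProduct.inl : Multiplicative (Fin k → ℤ) →*
      Multiplicative (Fin k → ℤ) ⋊[zdAction Φ] Multiplicative ℤ).range :=
      ⟨hx, by rw [hker]; exact h1⟩
    rwa [htriv, Subgroup.mem_bot] at hmem
  have hcyc : IsCyclic H := by
    refine isCyclic_of_injective (SemidirectProduct.rightHom.comp H.subtype) ?_
    rw [injective_iff_map_eq_one]
    exact fun x hx => Subtype.ext (hone x x.2 hx)
  obtain ⟨h, hH⟩ : ∃ h, Subgroup.zpowers h = H :=
    (Subgroup.isCyclic_iff_exists_zpowers_eq_top H).mp hcyc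
  have hr : SemidirectProduct.rightHom h ≠ 1 := fun h1 => hbot <| by
    rw [← hH, hone h (hH ▸ Subgroup.mem_zpowers h) h1, Subgroup.zpowers_one_eq_bot]
  obtain ⟨h, hH, hpos⟩ : ∃ h, Subgroup.zpowers h = H ∧
      0 < (SemidirectProduct.rightHom h).toAdd := by
    rcases lt_or_gt_of_ne (show (SemidirectProduct.rightHom h).toAdd ≠ 0 from hr) with hlt | hgt
    · exact ⟨h⁻¹, by rw [Subgroup.zpowers_inv, hH], by rw [map_inv, toAdd_inv]; omega⟩
    · exact ⟨h, hH, hgt⟩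
  have hdec : SemidirectProduct.inr (Multiplicative.ofAdd (SemidirectProduct.rightHom h).toAdd) *
      SemidirectProduct.inl (Multiplicative.ofAdd
        ((zdAction Φ h.right)⁻¹ h.left).toAdd) = h := by
    ext1 <;> simp
  refine ⟨_, _, hpos, by rw [hdec, hH], ?_⟩
  rw [hdec]
  intro h1
  simp [h1] at hpos
end

section
/- Let k ≥ 1 be an integer, let Φ be a group automorphism of ℤ^k, and let G = ℤ^k ⋊_Φ ℤ. Let H be a subgroup of G that is strongly quasiconvex with respect to some finite generating set of G. Then H is either trivial or of finite index in G. -/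
/-- The word distance on a group `G` with respect to a generating set `S`: the least `n`
such that `x⁻¹ * y` is a product of `n` elements of `S ∪ S⁻¹`. -/
noncomputable def wordDist {G : Type*} [Group G] (S : Set G) (x y : G) : ℕ :=
  sInf {n : ℕ | ∃ f : Fin n → G, (∀ i, f i ∈ S ∨ (f i)⁻¹ ∈ S) ∧ x⁻¹ * y = (List.ofFn f).prod}

/-- `γ` restricted to `[a, b]` is an `(L, C)`-quasi-geodesic with respect to the distance
function `d`. -/
def IsQuasiGeodesicOn {X : Type*} (d : X → X → ℝ) (L C a b : ℝ) (γ : ℝ → X) : Prop :=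
  ∀ s ∈ Set.Icc a b, ∀ t ∈ Set.Icc a b,
    (1 / L) * |s - t| - C ≤ d (γ s) (γ t) ∧ d (γ s) (γ t) ≤ L * |s - t| + C

/-- `Y` is strongly quasiconvex (with respect to the distance function `d`): for all
`L ≥ 1` and `C ≥ 0` there is an `R` such that every `(L, C)`-quasi-geodesic with endpoints
in `Y` stays in the `R`-neighborhood of `Y`. -/
def StronglyQuasiconvexIn {X : Type*} (d : X → X → ℝ) (Y : Set X) : Prop :=
  ∀ L C : ℝ, 1 ≤ L → 0 ≤ C → ∃ R : ℝ, ∀ a b : ℝ, a ≤ b → ∀ γ : ℝ → X,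
    IsQuasiGeodesicOn d L C a b γ → γ a ∈ Y → γ b ∈ Y →
    ∀ s ∈ Set.Icc a b, ∃ y ∈ Y, d (γ s) y ≤ R


namespace SQC

/-! ### Weighted word metrics -/

/-- `WPath T V ρ c x y`: there is a path from `x` to `y` in the Cayley graph with edges
`g — g * s`, `s ∈ T`, all of whose vertices except possibly the last lie in `V`, and whose cost
`∑ ρ g` (over all vertices except the last) is `c`. -/
inductive WPath {G : Type*} [Group G] (T V : Set G) (ρ : G → ℕ) : ℕ → G → G → Prop
  | refl (x : G) : WPath T V ρ 0 x x
  | step {c : ℕ} {x y : G} (s : G) : WPath T V ρ c x y → s ∈ T → y ∈ V →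
      WPath T V ρ (c + ρ y) x (y * s)

/-- The distance from `x` to `y` in the Cayley graph of `T` with vertex weights `ρ`. -/
noncomputable def wd {G : Type*} [Group G] (T : Set G) (ρ : G → ℕ) (x y : G) : ℕ :=
  sInf {c | WPath T Set.univ ρ c x y}

section metric

variable {G : Type*} [Group G] {T V : Set G} {ρ : G → ℕ}

lemma WPath.trans {a b : ℕ} {x y z : G} (h : WPath T V ρ a x y) (h' : WPath T V ρ b y z) :
    WPath T V ρ (a + b) x z := by
  induction h' with
  | refl => simpa using h
  | step s _ hs hy ih => rw [← add_assoc]; exact WPath.step s (ih h) hs hy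

lemma WPath.mono {T' V' : Set G} {ρ' : G → ℕ} {c : ℕ} {x y : G} (h : WPath T V ρ c x y)
    (hT : T ⊆ T') (hV : V ⊆ V') (hρ : ∀ g ∈ V, ρ g = ρ' g) : WPath T' V' ρ' c x y := by
  induction h with
  | refl => exact .refl _
  | step s _ hs hy ih => rw [hρ _ hy]; exact .step s ih (hT hs) (hV hy)

lemma WPath.mul_left {c : ℕ} {x y : G} (g : G) (h : WPath T Set.univ 1 c x y) :
    WPath T Set.univ 1 c (g * x) (g * y) := by
  induction h with
  | refl => exact .refl _
  | step s _ hs _ ih => rw [← mul_assoc]; exact .step s ih hs trivial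

lemma WPath.pow {x s : G} {n : ℕ} (hs : s ∈ T) (hV : ∀ i < n, x * s ^ i ∈ V) :
    WPath T V 1 n x (x * s ^ n) := by
  induction n with
  | zero => simpa using WPath.refl x
  | succ n ih =>
    rw [pow_succ, ← mul_assoc]
    exact .step s (ih fun i hi => hV i (by omega)) hs (hV n (by omega))

lemma exists_wpath (hT : Subgroup.closure T = ⊤) (hT' : ∀ s ∈ T, s⁻¹ ∈ T) (x y : G) :
    ∃ c, WPath T Set.univ ρ c x y := by
  have key : ∀ g : G, ∀ x : G, ∃ c, WPath T Set.univ ρ c x (x * g) := by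
    intro g
    have hg : g ∈ Subgroup.closure T := hT ▸ Subgroup.mem_top g
    induction hg using Subgroup.closure_induction with
    | mem s hs => exact fun x => ⟨_, .step s (.refl x) hs trivial⟩
    | one => exact fun x => ⟨0, by simpa using WPath.refl x⟩
    | mul a b _ _ ha hb =>
      intro x
      obtain ⟨c, hc⟩ := ha x
      obtain ⟨c', hc'⟩ := hb (x * a)
      exact ⟨_, by simpa [mul_assoc] using hc.trans hc'⟩
    | inv a _ ha =>
      intro x
      obtain ⟨c, hc⟩ := ha (x * a⁻¹)
      -- reversal of a path changes its cost, so only existence is carried over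
      have rev : ∀ {c : ℕ} {u v : G}, WPath T Set.univ ρ c u v →
          ∃ c', WPath T Set.univ ρ c' v u := by
        intro c u v h
        induction h with
        | refl u => exact ⟨0, .refl u⟩
        | @step c u w s _ hs _ ih =>
          obtain ⟨c', hc'⟩ := ih
          have h1 : WPath T Set.univ ρ (0 + ρ (w * s)) (w * s) (w * s * s⁻¹) :=
            .step s⁻¹ (.refl _) (hT' s hs) trivial
          rw [mul_inv_cancel_right] at h1
          exact ⟨_, h1.trans hc'⟩
      rw [inv_mul_cancel_right] at hc
      exact rev hc
  obtain ⟨c, hc⟩ := key (x⁻¹ * y) x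
  exact ⟨c, by simpa using hc⟩

lemma wpath_wd (hT : Subgroup.closure T = ⊤) (hT' : ∀ s ∈ T, s⁻¹ ∈ T) (x y : G) :
    WPath T Set.univ ρ (wd T ρ x y) x y :=
  Nat.sInf_mem (s := {c | WPath T Set.univ ρ c x y}) (exists_wpath hT hT' x y)

lemma wd_le {c : ℕ} {x y : G} (h : WPath T Set.univ ρ c x y) : wd T ρ x y ≤ c :=
  Nat.sInf_le h

lemma wd_triangle (hT : Subgroup.closure T = ⊤) (hT' : ∀ s ∈ T, s⁻¹ ∈ T) (x y z : G) :
    wd T ρ x z ≤ wd T ρ x y + wd T ρ y z :=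
  wd_le ((wpath_wd hT hT' x y).trans (wpath_wd hT hT' y z))

lemma wd_mul_right (s : G) (hs : s ∈ T) (x : G) : wd T 1 x (x * s) ≤ 1 := by
  simpa using wd_le (WPath.step s (WPath.refl (T := T) (ρ := 1) (V := Set.univ) x) hs trivial)

lemma wd_mul_left (hT : Subgroup.closure T = ⊤) (hT' : ∀ s ∈ T, s⁻¹ ∈ T) (g x y : G) :
    wd T 1 (g * x) (g * y) = wd T 1 x y := by
  refine le_antisymm (wd_le ((wpath_wd hT hT' x y).mul_left g)) (wd_le ?_)
  simpa using (wpath_wd hT hT' (g * x) (g * y)).mul_left g⁻¹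

lemma wd_self (x : G) : wd T ρ x x = 0 := Nat.le_zero.mp (wd_le (.refl x))

lemma WPath.bound {M : ℕ} (hρ : ∀ g, ρ g ≤ M) {c : ℕ} {x y : G} (h : WPath T Set.univ 1 c x y) :
    ∃ c' ≤ M * c, WPath T Set.univ ρ c' x y := by
  induction h with
  | refl => exact ⟨0, by simp, .refl _⟩
  | @step c x y s _ hs _ ih =>
    obtain ⟨c', hc', h'⟩ := ih
    refine ⟨c' + ρ y, ?_, .step s h' hs trivial⟩
    have := hρ y
    simp only [Pi.one_apply]
    nlinarith

/-- Paths of length `c` stay in the `c`-ball around their initial vertex. -/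
lemma WPath.stay_start {c : ℕ} {x y : G} (h : WPath T Set.univ 1 c x y)
    (hV : ∀ g, wd T 1 x g ≤ c → g ∈ V) : WPath T V 1 c x y := by
  induction h with
  | refl => exact .refl _
  | @step c x y s h hs _ ih =>
    have : wd T 1 x y ≤ c := wd_le h
    exact .step s (ih fun g hg => hV g (by simp; omega)) hs (hV y (by simp; omega))

/-- Paths of length `c` stay in the `c`-ball around their final vertex. -/
lemma WPath.stay_end (hT : Subgroup.closure T = ⊤) (hT' : ∀ s ∈ T, s⁻¹ ∈ T)
    {c : ℕ} {x y : G} (h : WPath T Set.univ 1 c x y)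
    (hV : ∀ g, wd T 1 g y ≤ c → g ∈ V) : WPath T V 1 c x y := by
  induction h with
  | refl => exact .refl _
  | @step c x y s h hs _ ih =>
    have h1 := wd_mul_right s hs y
    refine .step s (ih fun g hg => hV g ?_) hs (hV y ?_)
    · have := wd_triangle (ρ := 1) hT hT' g y (y * s)
      simp; omega
    · simp; omega

lemma finite_ball (hfin : T.Finite) (hT : Subgroup.closure T = ⊤) (hT' : ∀ s ∈ T, s⁻¹ ∈ T)
    (x : G) (n : ℕ) : {y | wd T 1 x y ≤ n}.Finite := by
  have key : ∀ n, {y | WPath T Set.univ 1 n x y}.Finite := by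
    intro n
    induction n with
    | zero =>
      refine (Set.finite_singleton x).subset ?_
      intro y hy
      have : ∀ {c : ℕ} {u v : G}, WPath T Set.univ 1 c u v → c = 0 → v = u := by
        intro c u v h
        induction h with
        | refl => simp
        | step => simp
      exact this hy rfl
    | succ n ih =>
      refine (ih.mul hfin).subset ?_
      intro y hy
      have : ∀ {c : ℕ} {u v : G}, WPath T Set.univ 1 c u v → c = n + 1 →
          ∃ w s, WPath T Set.univ 1 n u w ∧ s ∈ T ∧ w * s = v := by
        intro c u v h hc
        cases h with
        | refl => simp at hc
        | @step c _ w s h hs _ =>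
          have : c = n := by simpa using hc
          exact ⟨w, s, this ▸ h, hs, rfl⟩
      obtain ⟨w, s, hw, hs, rfl⟩ := this hy rfl
      exact Set.mul_mem_mul hw hs
  refine ((Set.finite_Iic n).biUnion fun i _ => key i).subset ?_
  intro y hy
  exact Set.mem_biUnion (show wd T 1 x y ∈ Set.Iic n from hy) (wpath_wd hT hT' x y)

/-- A path, written as a sequence of vertices. -/
lemma WPath.exists_seq {c : ℕ} {x y : G} (h : WPath T Set.univ ρ c x y) :
    ∃ (N : ℕ) (q : ℕ → G), q 0 = x ∧ q N = y ∧ (∀ i < N, ∃ s ∈ T, q (i + 1) = q i * s) ∧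
      ∑ i ∈ Finset.range N, ρ (q i) = c := by
  induction h with
  | refl x => exact ⟨0, fun _ => x, by simp⟩
  | @step c x y s h hs _ ih =>
    obtain ⟨N, q, h0, hN, hq, hc⟩ := ih
    refine ⟨N + 1, fun i => if i ≤ N then q i else y * s, by simpa using h0, by simp, ?_, ?_⟩
    · intro i hi
      rcases Nat.lt_succ_iff_lt_or_eq.mp hi with hi | rfl
      · obtain ⟨s', hs', h'⟩ := hq i hi
        exact ⟨s', hs', by simp [hi.le, Nat.succ_le_of_lt hi, h']⟩
      · exact ⟨s, hs, by simp [hN]⟩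
    · rw [Finset.sum_range_succ, ← hc]
      congr 1
      · refine Finset.sum_congr rfl fun i hi => ?_
        simp [(Finset.mem_range.mp hi).le]
      · simp [hN]

lemma WPath.of_seq {q : ℕ → G} {N : ℕ} (hq : ∀ i < N, ∃ s ∈ T, q (i + 1) = q i * s)
    {i j : ℕ} (hij : i ≤ j) (hj : j ≤ N) :
    WPath T Set.univ ρ (∑ l ∈ Finset.Ico i j, ρ (q l)) (q i) (q j) := by
  induction j, hij using Nat.le_induction with
  | base => simpa using WPath.refl (q i)
  | succ j hij ih =>
    obtain ⟨s, hs, h⟩ := hq j (by omega)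
    rw [Finset.sum_Ico_succ_top hij, h]
    exact .step s (ih (by omega)) hs trivial

lemma wd_lipschitz {f : G → ℕ} {C : ℕ} (h1 : f 1 = 0) (hf : ∀ g, ∀ s ∈ T, f (g * s) ≤ f g + C)
    (hT : Subgroup.closure T = ⊤) (hT' : ∀ s ∈ T, s⁻¹ ∈ T) (g : G) :
    f g ≤ C * wd T 1 1 g := by
  have key : ∀ {c : ℕ} {x y : G}, WPath T Set.univ 1 c x y → f y ≤ f x + C * c := by
    intro c x y h
    induction h with
    | refl => simp
    | @step c x y s h hs _ ih =>
      have := hf y s hs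
      simp only [Pi.one_apply]
      nlinarith
  simpa [h1] using key (wpath_wd (ρ := 1) hT hT' 1 g)

lemma wordDist_eq_wd (S : Set G) (x y : G) : wordDist S x y = wd (S ∪ S⁻¹) 1 x y := by
  unfold wordDist wd
  congr 1
  ext n
  simp only [Set.mem_ofPred_eq]
  constructor
  · rintro ⟨f, hf, h⟩
    have : y = x * (List.ofFn f).prod := by rw [← h]; simp
    rw [this]
    clear h this
    induction n with
    | zero => simpa using WPath.refl x
    | succ n ih =>
      have h1 := ih (fun i => f i.castSucc) fun i => hf _
      have h2 := WPath.step (T := S ∪ S⁻¹) (f (Fin.last n)) h1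
        (by simpa using hf (Fin.last n)) trivial
      rw [List.ofFn_succ', List.prod_concat, ← mul_assoc]
      exact h2
  · intro h
    induction h with
    | refl x => exact ⟨Fin.elim0, fun i => i.elim0, by simp⟩
    | @step c x y s h hs _ ih =>
      obtain ⟨f, hf, h'⟩ := ih
      refine ⟨Fin.snoc (α := fun _ => G) f s, ?_, ?_⟩
      · intro i
        refine Fin.lastCases ?_ (fun i => ?_) i
        · simpa using hs
        · simpa using hf i
      · simp only [Pi.one_apply]
        rw [List.ofFn_succ', List.prod_concat, ← mul_assoc, h']
        simp

end metric

/-! ### Strong quasiconvexity and weighted geodesics -/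

section criterion

variable {G : Type*} [Group G] {S T : Set G} {H : Subgroup G}

/-- Geodesics for a vertex weight with values in `[1, M]` are quasi-geodesics with constants
depending only on `M`, hence stay uniformly close to a strongly quasiconvex subgroup
containing their endpoints. -/
lemma exists_near_of_weight (hS : Subgroup.closure S = ⊤) (hSfin : S.Finite)
    (hsqc : StronglyQuasiconvexIn (fun x y => (wordDist S x y : ℝ)) (H : Set G))
    (hTfin : T.Finite) (hST : S ⊆ T) (hT' : ∀ s ∈ T, s⁻¹ ∈ T) (M : ℕ) :
    ∃ E : Set G, E.Finite ∧ ∀ ρ : G → ℕ, (∀ g, 1 ≤ ρ g) → (∀ g, ρ g ≤ M) →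
      ∀ x ∈ H, ∀ y ∈ H, ∃ (N : ℕ) (q : ℕ → G), q 0 = x ∧ q N = y ∧
        (∀ i < N, ∃ s ∈ T, q (i + 1) = q i * s) ∧
        ∑ i ∈ Finset.range N, ρ (q i) = wd T ρ x y ∧
        ∀ i ≤ N, ∃ u ∈ H, ∃ w ∈ E, q i = u * w := by
  have hT : Subgroup.closure T = ⊤ := top_le_iff.mp (hS ▸ Subgroup.closure_mono hST)
  have hU : Subgroup.closure (S ∪ S⁻¹) = ⊤ :=
    top_le_iff.mp (hS ▸ Subgroup.closure_mono Set.subset_union_left)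
  have hU' : ∀ s ∈ S ∪ S⁻¹, s⁻¹ ∈ S ∪ S⁻¹ := by
    rintro s (h | h)
    · exact Or.inr (by simpa using h)
    · exact Or.inl (by simpa using h)
  have hUT : S ∪ S⁻¹ ⊆ T := by
    rintro s (h | h)
    · exact hST h
    · simpa using hT' _ (hST (Set.mem_inv.mp h))
  have hUfin : (S ∪ S⁻¹).Finite := hSfin.union hSfin.inv
  -- every element of `T` has `S`-length at most `J`
  obtain ⟨J, hJ⟩ : ∃ J : ℕ, ∀ s ∈ T, wd (S ∪ S⁻¹) 1 1 s ≤ J := by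
    obtain ⟨J, hJ⟩ := (hTfin.image (wd (S ∪ S⁻¹) 1 1)).bddAbove
    exact ⟨J, fun s hs => hJ (Set.mem_image_of_mem _ hs)⟩
  have hupper : ∀ {c : ℕ} {x y : G}, WPath T Set.univ 1 c x y →
      wd (S ∪ S⁻¹) 1 x y ≤ J * c := by
    intro c x y h
    induction h with
    | refl => simp [wd_self]
    | @step c x y s h hs _ ih =>
      have h1 := wd_triangle (ρ := 1) hU hU' x y (y * s)
      have h2 := wd_mul_left hU hU' y 1 s
      rw [mul_one] at h2
      have := hJ s hs
      simp only [Pi.one_apply, mul_add, mul_one]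
      omega
  set L : ℕ := M + J + 1 with hL
  obtain ⟨R, hR⟩ := hsqc L L (by simp [hL]; positivity) (by positivity)
  refine ⟨(· ⁻¹) '' {w | wd (S ∪ S⁻¹) 1 1 w ≤ ⌊R⌋₊},
    (finite_ball hUfin hU hU' 1 _).image _, ?_⟩
  intro ρ hρ1 hρM x hx y hy
  obtain ⟨N, q, h0, hN, hq, hc⟩ := (wpath_wd (ρ := ρ) hT hT' x y).exists_seq
  refine ⟨N, q, h0, hN, hq, hc, ?_⟩
  -- minimality of the cost bounds the number of steps between two vertices
  have hlow : ∀ i j, i ≤ j → j ≤ N → j - i ≤ M * wd (S ∪ S⁻¹) 1 (q i) (q j) := by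
    intro i j hij hj
    have h1 : wd T ρ x y ≤ wd T ρ x (q i) + wd T ρ (q i) (q j) + wd T ρ (q j) y :=
      (wd_triangle hT hT' x (q j) y).trans
        (Nat.add_le_add_right (wd_triangle hT hT' x (q i) (q j)) _)
    have h2 := wd_le (WPath.of_seq (ρ := ρ) hq (Nat.zero_le i) (hij.trans hj))
    have h3 := wd_le (WPath.of_seq (ρ := ρ) hq hj le_rfl)
    rw [h0] at h2
    rw [hN] at h3
    have h4 : ∑ l ∈ Finset.Ico 0 i, ρ (q l) + ∑ l ∈ Finset.Ico i j, ρ (q l) +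
        ∑ l ∈ Finset.Ico j N, ρ (q l) = wd T ρ x y := by
      rw [Finset.sum_Ico_consecutive _ (Nat.zero_le i) hij,
        Finset.sum_Ico_consecutive _ (Nat.zero_le j) hj, ← hc, Finset.range_eq_Ico]
    have h5 : j - i ≤ ∑ l ∈ Finset.Ico i j, ρ (q l) := by
      calc j - i = ∑ l ∈ Finset.Ico i j, 1 := by simp
        _ ≤ _ := Finset.sum_le_sum fun l _ => hρ1 _
    obtain ⟨c', hc', h6⟩ := ((wpath_wd (ρ := 1) hU hU' (q i) (q j)).mono (ρ' := 1) hUT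
      le_rfl (fun _ _ => rfl)).bound hρM
    have h7 := wd_le h6
    omega
  have hup : ∀ i j, i ≤ j → j ≤ N → wd (S ∪ S⁻¹) 1 (q i) (q j) ≤ J * (j - i) := by
    intro i j hij hj
    have := hupper (WPath.of_seq (ρ := 1) hq hij hj)
    simpa using this
  have hsymm : ∀ a b, wd (S ∪ S⁻¹) 1 a b = wd (S ∪ S⁻¹) 1 b a := by
    have rev : ∀ {c : ℕ} {u v : G}, WPath (S ∪ S⁻¹) Set.univ 1 c u v →
        WPath (S ∪ S⁻¹) Set.univ 1 c v u := by
      intro c u v h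
      induction h with
      | refl u => exact .refl u
      | @step c u w s _ hs _ ih =>
        have h1 : WPath (S ∪ S⁻¹) Set.univ 1 (0 + 1) (w * s) (w * s * s⁻¹) :=
          .step s⁻¹ (.refl _) (hU' s hs) trivial
        rw [mul_inv_cancel_right] at h1
        have := h1.trans ih
        rw [zero_add, add_comm] at this
        exact this
    intro a b
    exact le_antisymm (wd_le (rev (wpath_wd hU hU' b a))) (wd_le (rev (wpath_wd hU hU' a b)))
  have hqg : IsQuasiGeodesicOn (fun x y => (wordDist S x y : ℝ)) L L 0 N
      (fun s => q ⌊s⌋₊) := by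
    have main : ∀ s ∈ Set.Icc (0 : ℝ) N, ∀ t ∈ Set.Icc (0 : ℝ) N, s ≤ t →
        (1 / (L : ℝ)) * (t - s) - L ≤ (wd (S ∪ S⁻¹) 1 (q ⌊s⌋₊) (q ⌊t⌋₊) : ℝ) ∧
        (wd (S ∪ S⁻¹) 1 (q ⌊s⌋₊) (q ⌊t⌋₊) : ℝ) ≤ L * (t - s) + L := by
      intro s hs t ht hst
      have hij : ⌊s⌋₊ ≤ ⌊t⌋₊ := Nat.floor_mono hst
      have hjN : ⌊t⌋₊ ≤ N := Nat.floor_le_of_le ht.2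
      have e1 : (⌊t⌋₊ : ℝ) - ⌊s⌋₊ ≤ M * wd (S ∪ S⁻¹) 1 (q ⌊s⌋₊) (q ⌊t⌋₊) := by
        rw [← Nat.cast_sub hij]; exact_mod_cast hlow _ _ hij hjN
      have e2 : (wd (S ∪ S⁻¹) 1 (q ⌊s⌋₊) (q ⌊t⌋₊) : ℝ) ≤ J * ((⌊t⌋₊ : ℝ) - ⌊s⌋₊) := by
        rw [← Nat.cast_sub hij]; exact_mod_cast hup _ _ hij hjN
      have f1 := Nat.floor_le hs.1
      have f2 := Nat.floor_le ht.1
      have f3 := Nat.lt_floor_add_one s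
      have f4 := Nat.lt_floor_add_one t
      set d : ℝ := (wd (S ∪ S⁻¹) 1 (q ⌊s⌋₊) (q ⌊t⌋₊) : ℝ)
      have hd : 0 ≤ d := Nat.cast_nonneg _
      have hLr : (L : ℝ) = M + J + 1 := by simp [hL]
      have hM0 : (0 : ℝ) ≤ M := Nat.cast_nonneg _
      have hJ0 : (0 : ℝ) ≤ J := Nat.cast_nonneg _
      have hLpos : (0 : ℝ) < L := by rw [hLr]; positivity
      constructor
      · rw [sub_le_iff_le_add, one_div, inv_mul_le_iff₀ hLpos]
        nlinarith [mul_nonneg hJ0 hd]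
      · have : J * ((⌊t⌋₊ : ℝ) - ⌊s⌋₊) ≤ J * (t - s + 1) :=
          mul_le_mul_of_nonneg_left (by linarith) hJ0
        nlinarith [mul_nonneg hM0 (sub_nonneg.mpr hst)]
    intro s hs t ht
    simp only [wordDist_eq_wd]
    rcases le_total s t with hst | hst
    · rw [abs_sub_comm, abs_of_nonneg (sub_nonneg.mpr hst)]
      exact main s hs t ht hst
    · rw [abs_of_nonneg (sub_nonneg.mpr hst), hsymm]
      exact main t ht s hs hst
  intro i hi
  obtain ⟨u, hu, hd⟩ := hR 0 N (by positivity) _ hqg (by simpa [h0] using hx)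
    (by simpa [hN] using hy) i ⟨by positivity, by exact_mod_cast hi⟩
  simp only [Nat.floor_natCast, wordDist_eq_wd] at hd
  refine ⟨u, hu, u⁻¹ * q i, ⟨(q i)⁻¹ * u, ?_, by simp⟩, by simp⟩
  have := wd_mul_left hU hU' (q i)⁻¹ (q i) u
  rw [inv_mul_cancel] at this
  simp only [Set.mem_ofPred_eq]
  rw [this]
  exact Nat.le_floor hd

/-- Obstruction to strong quasiconvexity: a path between points `1, y` of `H` whose length is at
most `K * r`, where `1` and `y` are `4 * r`-far apart, comes uniformly close to `H` at a point
outside the `r`-balls around `1` and `y`. The reason is that making this middle part of the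
neighborhood of `H` expensive produces a weighted geodesic that could not stay near `H`. -/
lemma no_detour (hS : Subgroup.closure S = ⊤) (hSfin : S.Finite)
    (hsqc : StronglyQuasiconvexIn (fun x y => (wordDist S x y : ℝ)) (H : Set G))
    (hTfin : T.Finite) (hST : S ⊆ T) (hT' : ∀ s ∈ T, s⁻¹ ∈ T) (K : ℕ) :
    ∃ E : Set G, E.Finite ∧ ∀ r : ℕ, 1 ≤ r → ∀ y ∈ H, 4 * r ≤ wd T 1 1 y →
      ∀ V : Set G, (∀ g ∈ V, r ≤ wd T 1 1 g → r ≤ wd T 1 g y →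
        ¬ ∃ u ∈ H, ∃ w ∈ E, g = u * w) →
      ∀ c ≤ K * r, ¬ WPath T V 1 c 1 y := by
  classical
  have hT : Subgroup.closure T = ⊤ := top_le_iff.mp (hS ▸ Subgroup.closure_mono hST)
  obtain ⟨E, hE, hnear⟩ := exists_near_of_weight hS hSfin hsqc hTfin hST hT' (K + 1)
  refine ⟨E, hE, ?_⟩
  intro r hr y hy hry V hV c hc hpath
  set W : Set G := {g | r ≤ wd T 1 1 g ∧ r ≤ wd T 1 g y ∧ ∃ u ∈ H, ∃ w ∈ E, g = u * w} with hW
  set ρ : G → ℕ := fun g => if g ∈ W then K + 1 else 1 with hρ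
  obtain ⟨N, q, h0, hN, hq, hsum, hnr⟩ := hnear ρ
    (fun g => by simp only [hρ]; split_ifs <;> omega)
    (fun g => by simp only [hρ]; split_ifs <;> omega) 1 H.one_mem y hy
  have hcost : wd T ρ 1 y ≤ c := by
    refine wd_le (hpath.mono le_rfl (Set.subset_univ _) ?_)
    intro g hg
    have : g ∉ W := fun h => hV g hg h.1 h.2.1 h.2.2
    simp [hρ, this]
  -- the distance to `1`, truncated to `[r, 3r]`, only increases at vertices in `W`
  set f : ℕ → ℕ := fun i => max r (min (3 * r) (wd T 1 1 (q i))) with hf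
  have hstep : ∀ n ≤ N, (K + 1) * f n ≤ (K + 1) * f 0 + ∑ i ∈ Finset.range n, ρ (q i) := by
    intro n hn
    induction n with
    | zero => simp
    | succ n ih =>
      rw [Finset.sum_range_succ]
      have ih := ih (by omega)
      obtain ⟨s, hs, hqs⟩ := hq n (by omega)
      have h1 := wd_triangle (ρ := 1) hT hT' 1 (q n) (q (n + 1))
      have h2 := wd_mul_right s hs (q n)
      rw [← hqs] at h2
      by_cases hw : q n ∈ W
      · have h3 : ρ (q n) = K + 1 := by simp [hρ, hw]
        have h4 : f (n + 1) ≤ f n + 1 := by simp only [hf]; omega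
        rw [h3]
        nlinarith
      · have h5 : wd T 1 1 (q n) < r ∨ 3 * r < wd T 1 1 (q n) := by
          by_contra hcon
          push Not at hcon
          have h6 := wd_triangle (ρ := 1) hT hT' 1 (q n) y
          exact hw ⟨hcon.1, by omega, hnr n (by omega)⟩
        have h4 : f (n + 1) ≤ f n := by simp only [hf]; omega
        nlinarith
  have h1 := hstep N le_rfl
  have h2 : f N = 3 * r := by simp only [hf, hN]; omega
  have h3 : f 0 = r := by simp only [hf, h0, wd_self]; omega
  rw [h2, h3, hsum] at h1
  nlinarith

end criterion

/-! ### Eigenvalues of integral automorphisms -/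

section algebra

open Matrix Polynomial

lemma exists_eigenrow {ι : Type*} [Fintype ι] [DecidableEq ι] (M : Matrix ι ι ℤ) (z : ℂ)
    (hz : z ∈ ((M.charpoly).map (algebraMap ℤ ℂ)).roots) :
    ∃ a : ι → ℂ, a ≠ 0 ∧ a ᵥ* (M.map (algebraMap ℤ ℂ)) = z • a := by
  have h1 := Polynomial.isRoot_of_mem_roots hz
  rw [Polynomial.IsRoot, ← Matrix.charpoly_map, Matrix.eval_charpoly] at h1
  obtain ⟨a, ha, h⟩ := Matrix.exists_vecMul_eq_zero_iff.mpr h1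
  refine ⟨a, ha, ?_⟩
  rw [Matrix.vecMul_sub, sub_eq_zero] at h
  rw [← h]
  ext i
  simp [Matrix.scalar_apply, Matrix.vecMul_diagonal, mul_comm]

/-- By Kronecker's theorem, an invertible integral matrix either has an eigenvalue that is a root
of unity (so some power fixes an integral vector), or has eigenvalues both strictly outside and
strictly inside the unit circle. -/
lemma matrix_dichotomy {ι : Type*} [Fintype ι] [DecidableEq ι] [Nonempty ι] (M : Matrix ι ι ℤ)
    (hM : IsUnit M.det) :
    (∃ j : ℕ, 1 ≤ j ∧ ∃ v : ι → ℤ, v ≠ 0 ∧ (M ^ j) *ᵥ v = v) ∨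
    ((∃ (z : ℂ) (a : ι → ℂ), 1 < ‖z‖ ∧ a ≠ 0 ∧ a ᵥ* (M.map (algebraMap ℤ ℂ)) = z • a) ∧
     (∃ (z : ℂ) (a : ι → ℂ), ‖z‖ < 1 ∧ z ≠ 0 ∧ a ≠ 0 ∧
        a ᵥ* (M.map (algebraMap ℤ ℂ)) = z • a)) := by
  set p : ℂ[X] := (M.charpoly).map (algebraMap ℤ ℂ) with hp
  have hmonic : p.Monic := M.charpoly_monic.map _
  have hp' : p = (M.map (algebraMap ℤ ℂ)).charpoly := by
    rw [hp, Matrix.charpoly_map]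
  have hprod : ‖p.roots.prod‖ = 1 := by
    rw [hp', ← Matrix.det_eq_prod_roots_charpoly, ← RingHom.mapMatrix_apply, ← RingHom.map_det]
    rcases Int.isUnit_iff.mp hM with h | h <;> simp [h]
  have hne0 : ∀ z ∈ p.roots, z ≠ 0 := by
    rintro z hz rfl
    rw [Multiset.prod_eq_zero hz] at hprod
    simp at hprod
  have hnorm : (p.roots.map (fun z => ‖z‖)).prod = 1 := by
    rw [← hprod]
    exact (map_multiset_prod (normHom : ℂ →*₀ ℝ) p.roots).symm
  have hdeg : p.roots.card = Fintype.card ι := by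
    rw [← (IsAlgClosed.splits p).natDegree_eq_card_roots, hp', Matrix.charpoly_natDegree_eq_dim]
  have hroots : p.roots ≠ 0 := by
    rw [← Multiset.card_pos, hdeg]
    exact Fintype.card_pos
  by_cases hbig : ∃ z ∈ p.roots, 1 < ‖z‖
  · right
    obtain ⟨z, hz, hz1⟩ := hbig
    refine ⟨?_, ?_⟩
    · obtain ⟨a, ha, h⟩ := exists_eigenrow M z hz
      exact ⟨z, a, hz1, ha, h⟩
    · obtain ⟨w, hw, hw1⟩ : ∃ w ∈ p.roots, ‖w‖ < 1 := by
        by_contra hcon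
        push Not at hcon
        obtain ⟨m, hm⟩ := Multiset.exists_cons_of_mem hz
        have h1 : 1 ≤ (m.map (fun z => ‖z‖)).prod := by
          refine Multiset.one_le_prod ?_
          intro x hx
          obtain ⟨w, hw, rfl⟩ := Multiset.mem_map.mp hx
          exact hcon w (hm ▸ Multiset.mem_cons_of_mem hw)
        rw [hm, Multiset.map_cons, Multiset.prod_cons] at hnorm
        nlinarith
      obtain ⟨a, ha, h⟩ := exists_eigenrow M w hw
      exact ⟨w, a, hw1, hne0 w hw, ha, h⟩
  · left
    push Not at hbig
    obtain ⟨z, hz⟩ := Multiset.exists_mem_of_ne_zero hroots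
    have hmahler : p.mahlerMeasure = 1 := by
      rw [Polynomial.mahlerMeasure_eq_leadingCoeff_mul_prod_roots, hmonic.leadingCoeff]
      simp only [norm_one, one_mul]
      refine Multiset.prod_eq_one ?_
      intro x hx
      obtain ⟨w, hw, rfl⟩ := Multiset.mem_map.mp hx
      exact max_eq_left (hbig w hw)
    obtain ⟨j, hj, hzj⟩ := Polynomial.pow_eq_one_of_mahlerMeasure_eq_one (p := M.charpoly)
      hmahler (hne0 z hz) hz
    refine ⟨j, hj, ?_⟩
    obtain ⟨a, ha, h⟩ := exists_eigenrow M z hz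
    have hpow : ∀ n : ℕ, a ᵥ* ((M.map (algebraMap ℤ ℂ)) ^ n) = z ^ n • a := by
      intro n
      induction n with
      | zero => simp
      | succ n ih => rw [pow_succ, ← Matrix.vecMul_vecMul, ih, Matrix.smul_vecMul, h, smul_smul,
          ← pow_succ]
    have hdet : (M ^ j - 1).det = 0 := by
      have h1 : ((M.map (algebraMap ℤ ℂ)) ^ j - 1).det = 0 := by
        refine Matrix.exists_vecMul_eq_zero_iff.mp ⟨a, ha, ?_⟩
        rw [Matrix.vecMul_sub, hpow, hzj]
        simp
      have h2 : (algebraMap ℤ ℂ) (M ^ j - 1).det = 0 := by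
        rw [RingHom.map_det, map_sub, map_pow, map_one, RingHom.mapMatrix_apply]
        exact h1
      simpa using h2
    obtain ⟨v, hv, hv'⟩ := Matrix.exists_mulVec_eq_zero_iff.mpr hdet
    refine ⟨v, hv, ?_⟩
    rw [Matrix.sub_mulVec, Matrix.one_mulVec, sub_eq_zero] at hv'
    exact hv'

/-- The quotient of `ℤ^k` by the isolator of an invariant subgroup `B` of infinite index is some
`ℤ^r` with `r > 0`, on which the automorphism acts by an invertible matrix. -/
lemma exists_quotient {k : ℕ} (B : AddSubgroup (Fin k → ℤ))
    (Ψ : (Fin k → ℤ) ≃+ (Fin k → ℤ)) (hB : ∀ b, Ψ b ∈ B ↔ b ∈ B)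
    (hinf : ¬ Finite ((Fin k → ℤ) ⧸ B)) :
    ∃ (r : ℕ) (_ : 0 < r) (θ : (Fin k → ℤ) →+ (Fin r → ℤ)) (M : Matrix (Fin r) (Fin r) ℤ),
      IsUnit M.det ∧ Function.Surjective θ ∧ (∀ z, θ (Ψ z) = M *ᵥ θ z) ∧
      (∀ z, θ z = 0 ↔ ∃ l : ℕ, 1 ≤ l ∧ l • z ∈ B) := by
  let B' : Submodule ℤ (Fin k → ℤ) :=
    { carrier := {z | ∃ l : ℕ, 1 ≤ l ∧ l • z ∈ B}
      add_mem' := by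
        rintro a b ⟨l, hl, h⟩ ⟨l', hl', h'⟩
        refine ⟨l * l', Nat.mul_pos hl hl', ?_⟩
        rw [smul_add]
        refine B.add_mem ?_ ?_
        · rw [mul_comm, mul_smul]; exact B.nsmul_mem h _
        · rw [mul_smul]; exact B.nsmul_mem h' _
      zero_mem' := ⟨1, le_rfl, by simp [B.zero_mem]⟩
      smul_mem' := by
        rintro c a ⟨l, hl, h⟩
        refine ⟨l, hl, ?_⟩
        rw [smul_comm]
        exact B.zsmul_mem h c }
  have hmem : ∀ z, z ∈ B' ↔ ∃ l : ℕ, 1 ≤ l ∧ l • z ∈ B := fun z => Iff.rfl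
  have hΨ : ∀ z, Ψ z ∈ B' ↔ z ∈ B' := by
    intro z
    simp only [hmem, ← map_nsmul, hB]
  let Ψl : (Fin k → ℤ) ≃ₗ[ℤ] (Fin k → ℤ) := Ψ.toIntLinearEquiv
  have hmap : B'.map (Ψl : (Fin k → ℤ) →ₗ[ℤ] (Fin k → ℤ)) = B' := by
    ext z
    constructor
    · rintro ⟨w, hw, rfl⟩
      exact (hΨ w).mpr hw
    · intro hz
      refine ⟨Ψ.symm z, ?_, Ψ.apply_symm_apply z⟩
      rw [SetLike.mem_coe, ← hΨ, Ψ.apply_symm_apply]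
      exact hz
  let f := Submodule.Quotient.equiv B' B' Ψl hmap
  have htf : Module.IsTorsionFree ℤ ((Fin k → ℤ) ⧸ B') := by
    rw [Module.isTorsionFree_iff_smul_eq_zero]
    intro c x hcx
    by_contra hcon
    push Not at hcon
    obtain ⟨z, rfl⟩ := B'.mkQ_surjective x
    rw [← map_smul, Submodule.mkQ_apply, Submodule.Quotient.mk_eq_zero] at hcx
    rw [Submodule.mkQ_apply, ne_eq, ne_eq, Submodule.Quotient.mk_eq_zero] at hcon
    obtain ⟨l, hl, h⟩ := hcx
    refine hcon.2 ⟨l * c.natAbs, Nat.mul_pos hl (Int.natAbs_pos.mpr hcon.1), ?_⟩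
    rw [mul_smul]
    rcases Int.natAbs_eq c with h' | h'
    · rw [h', natCast_zsmul] at h
      exact h
    · rw [h', neg_smul, natCast_zsmul, smul_neg] at h
      exact neg_mem_iff.mp h
  let b := Module.finBasis ℤ ((Fin k → ℤ) ⧸ B')
  refine ⟨_, ?_, (b.equivFun.toLinearMap ∘ₗ B'.mkQ).toAddMonoidHom,
    LinearMap.toMatrix b b f.toLinearMap, ?_, ?_, ?_, ?_⟩
  · by_contra h0
    have h0' : Module.finrank ℤ ((Fin k → ℤ) ⧸ B') = 0 := by omega
    have hsub : Subsingleton ((Fin k → ℤ) ⧸ B') := Module.finrank_zero_iff.mp h0'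
    have hfin : Finite ((Fin k → ℤ) ⧸ B.toIntSubmodule) := by
      refine Module.finite_of_fg_torsion _ ?_
      intro x
      obtain ⟨z, rfl⟩ := (B.toIntSubmodule).mkQ_surjective x
      obtain ⟨l, hl, h⟩ := (hmem z).mp
        ((Submodule.Quotient.mk_eq_zero B').mp (Subsingleton.elim _ _))
      refine ⟨⟨(l : ℤ), mem_nonZeroDivisors_of_ne_zero (by omega)⟩, ?_⟩
      rw [Submonoid.mk_smul, ← map_smul, Submodule.mkQ_apply, Submodule.Quotient.mk_eq_zero,
        natCast_zsmul]
      exact h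
    exact hinf hfin
  · exact LinearEquiv.isUnit_det f b b
  · exact b.equivFun.surjective.comp B'.mkQ_surjective
  · intro z
    have := LinearMap.toMatrix_mulVec_repr b b f.toLinearMap (B'.mkQ z)
    simp only [LinearMap.toAddMonoidHom_coe, LinearMap.comp_apply, LinearEquiv.coe_coe,
      Module.Basis.equivFun_apply]
    rw [this]
    rfl
  · intro z
    simp only [LinearMap.toAddMonoidHom_coe, LinearMap.comp_apply, LinearEquiv.coe_coe,
      LinearEquiv.map_eq_zero_iff, Submodule.mkQ_apply, Submodule.Quotient.mk_eq_zero]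
    exact hmem z

/-- The dichotomy driving the construction of detours: modulo an invariant subgroup `B` of
infinite index, either some power of the automorphism fixes an element of infinite order, or there
are expanded and contracted additive functionals vanishing on `B`. -/
lemma dichotomy {k : ℕ} (B : AddSubgroup (Fin k → ℤ))
    (Ψ : (Fin k → ℤ) ≃+ (Fin k → ℤ)) (hB : ∀ b, Ψ b ∈ B ↔ b ∈ B)
    (hinf : ¬ Finite ((Fin k → ℤ) ⧸ B)) :
    (∃ j : ℕ, 1 ≤ j ∧ ∃ e : Fin k → ℤ, (∀ l : ℕ, 1 ≤ l → l • e ∉ B) ∧ Ψ^[j] e - e ∈ B) ∨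
    ((∃ (z : ℂ) (φ : (Fin k → ℤ) →+ ℂ) (e : Fin k → ℤ), 1 < ‖z‖ ∧ φ e ≠ 0 ∧
        (∀ b ∈ B, φ b = 0) ∧ ∀ v, φ (Ψ v) = z * φ v) ∧
     (∃ (z : ℂ) (φ : (Fin k → ℤ) →+ ℂ) (e : Fin k → ℤ), ‖z‖ < 1 ∧ z ≠ 0 ∧ φ e ≠ 0 ∧
        (∀ b ∈ B, φ b = 0) ∧ ∀ v, φ (Ψ v) = z * φ v)) := by
  obtain ⟨r, hr, θ, M, hM, hsurj, hθ, hker⟩ := exists_quotient B Ψ hB hinf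
  have : Nonempty (Fin r) := ⟨⟨0, hr⟩⟩
  have hfun : ∀ (z : ℂ) (a : Fin r → ℂ), a ≠ 0 → a ᵥ* (M.map (algebraMap ℤ ℂ)) = z • a →
      ∃ (φ : (Fin k → ℤ) →+ ℂ) (e : Fin k → ℤ), φ e ≠ 0 ∧
        (∀ b ∈ B, φ b = 0) ∧ ∀ v, φ (Ψ v) = z * φ v := by
    intro z a ha h
    let φ : (Fin k → ℤ) →+ ℂ :=
      { toFun := fun v => a ⬝ᵥ (algebraMap ℤ ℂ ∘ θ v)
        map_zero' := by simp [dotProduct]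
        map_add' := fun u v => by simp [dotProduct, mul_add, Finset.sum_add_distrib] }
    have hφ : ∀ v, φ v = a ⬝ᵥ (algebraMap ℤ ℂ ∘ θ v) := fun v => rfl
    obtain ⟨i, hi⟩ := Function.ne_iff.mp ha
    obtain ⟨e, he⟩ := hsurj (Pi.single i 1)
    refine ⟨φ, e, ?_, ?_, ?_⟩
    · rw [hφ, he]
      simpa [dotProduct, Pi.single_apply] using hi
    · intro b hb
      have : θ b = 0 := (hker b).mpr ⟨1, le_rfl, by simpa using hb⟩
      rw [hφ, this]
      simp [dotProduct]
    · intro v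
      have h1 : algebraMap ℤ ℂ ∘ (M *ᵥ θ v) = (M.map (algebraMap ℤ ℂ)) *ᵥ (algebraMap ℤ ℂ ∘ θ v) := by
        ext i
        exact RingHom.map_mulVec (algebraMap ℤ ℂ) M (θ v) i
      rw [hφ, hφ, hθ, h1, dotProduct_mulVec, h, smul_dotProduct, smul_eq_mul]
  rcases matrix_dichotomy M hM with ⟨j, hj, v, hv, hjv⟩ | ⟨⟨z, a, hz, ha, h⟩, ⟨z', a', hz', hz0, ha', h'⟩⟩
  · left
    obtain ⟨e, rfl⟩ := hsurj v
    have hit : ∀ n : ℕ, ∀ u, θ (Ψ^[n] u) = (M ^ n) *ᵥ θ u := by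
      intro n u
      induction n with
      | zero => simp
      | succ n ih => rw [Function.iterate_succ_apply', hθ, ih, pow_succ', ← mulVec_mulVec]
    obtain ⟨l, hl, hl'⟩ := (hker (Ψ^[j] e - e)).mp (by rw [map_sub, hit, hjv, sub_self])
    have hsm : ∀ n : ℕ, Ψ^[n] (l • e) = l • Ψ^[n] e := by
      intro n
      induction n with
      | zero => simp
      | succ n ih => rw [Function.iterate_succ_apply', Function.iterate_succ_apply', ih, map_nsmul]
    refine ⟨j, hj, l • e, ?_, ?_⟩
    · intro l' hl'' hmem
      exact hv ((hker e).mpr ⟨l' * l, Nat.mul_pos hl'' hl, by rwa [mul_smul]⟩)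
    · rw [hsm, ← smul_sub]
      exact hl'
  · right
    obtain ⟨φ, e, h1, h2, h3⟩ := hfun z a ha h
    obtain ⟨φ', e', h1', h2', h3'⟩ := hfun z' a' ha' h'
    exact ⟨⟨z, φ, e, hz, h1, h2, h3⟩, ⟨z', φ', e', hz', hz0, h1', h2', h3'⟩⟩

end algebra

/-! ### Extensions of `ℤ` by `ℤ^k` and detours in them -/

/-- `G` as an extension of `ℤ` by `ℤ^k`: `ν` is the inclusion of `ℤ^k`, `p` the projection to `ℤ`
(both written on the additive groups), and `t` a lift of the generator of `ℤ`. -/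
structure Ext (k : ℕ) (G : Type*) [Group G] where
  ν : (Fin k → ℤ) → G
  p : G → ℤ
  t : G
  ν_add : ∀ a b, ν (a + b) = ν a * ν b
  ν_inj : Function.Injective ν
  p_mul : ∀ a b, p (a * b) = p a + p b
  p_eq_zero : ∀ g, p g = 0 ↔ ∃ z, ν z = g
  p_t : p t = 1

namespace Ext

variable {G : Type*} [Group G] {k : ℕ} (X : Ext k G)

lemma ν_zero : X.ν 0 = 1 := by
  have := X.ν_add 0 0
  simpa using this

lemma ν_neg (a : Fin k → ℤ) : X.ν (-a) = (X.ν a)⁻¹ := by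
  rw [eq_inv_iff_mul_eq_one, ← X.ν_add, neg_add_cancel, ν_zero]

lemma ν_sub (a b : Fin k → ℤ) : X.ν (a - b) = X.ν a * (X.ν b)⁻¹ := by
  rw [sub_eq_add_neg, X.ν_add, ν_neg]

lemma ν_nsmul (n : ℕ) (a : Fin k → ℤ) : X.ν (n • a) = X.ν a ^ n := by
  induction n with
  | zero => simp [ν_zero]
  | succ n ih => rw [succ_nsmul, X.ν_add, ih, pow_succ]

lemma ν_comm (a b : Fin k → ℤ) : X.ν a * X.ν b = X.ν b * X.ν a := by
  rw [← X.ν_add, add_comm, X.ν_add]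

lemma p_one : X.p 1 = 0 := by
  have := X.p_mul 1 1
  simpa using this

lemma p_inv (g : G) : X.p g⁻¹ = - X.p g := by
  have := X.p_mul g g⁻¹
  rw [mul_inv_cancel, p_one] at this
  omega

lemma p_pow (g : G) (n : ℕ) : X.p (g ^ n) = n * X.p g := by
  induction n with
  | zero => simp [p_one]
  | succ n ih => rw [pow_succ, X.p_mul, ih]; push_cast; ring

lemma p_zpow (g : G) (n : ℤ) : X.p (g ^ n) = n * X.p g := by
  cases n with
  | ofNat n => simpa using X.p_pow g n
  | negSucc n => rw [zpow_negSucc, p_inv, p_pow, Int.negSucc_eq]; push_cast; ring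

lemma p_ν (z : Fin k → ℤ) : X.p (X.ν z) = 0 := (X.p_eq_zero _).mpr ⟨z, rfl⟩

/-- Conjugation by `h`, as an automorphism of `ℤ^k`. -/
lemma exists_conj (h : G) : ∃ Ψ : (Fin k → ℤ) ≃+ (Fin k → ℤ),
    ∀ z, X.ν (Ψ z) = h * X.ν z * h⁻¹ := by
  have h1 : ∀ g : G, ∀ z, ∃ w, X.ν w = g * X.ν z * g⁻¹ := by
    intro g z
    rw [← X.p_eq_zero, X.p_mul, X.p_mul, p_inv, p_ν]
    ring
  choose f hf using h1
  refine ⟨{ toFun := f h, invFun := f h⁻¹, left_inv := ?_, right_inv := ?_, map_add' := ?_ },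
    fun z => hf h z⟩
  · intro z
    apply X.ν_inj
    rw [hf, hf]; group
  · intro z
    apply X.ν_inj
    rw [hf, hf]; group
  · intro a b
    apply X.ν_inj
    rw [hf, X.ν_add, X.ν_add, hf, hf]; group

end Ext

section detours

variable {G : Type*} [Group G] {k : ℕ} {S T : Set G} {H : Subgroup G}

lemma finiteIndex_of_cover {E : Set G} (hE : E.Finite)
    (h : ∀ g, ∃ u ∈ H, ∃ w ∈ E, g = u * w) : H.FiniteIndex := by
  have : Finite (G ⧸ H) := by
    have hfin : Finite E := hE
    refine Finite.of_surjective (fun w : E => (QuotientGroup.mk ((w : G)⁻¹) : G ⧸ H)) ?_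
    intro x
    obtain ⟨g, rfl⟩ := QuotientGroup.mk_surjective x
    obtain ⟨u, hu, w, hw, h'⟩ := h g⁻¹
    refine ⟨⟨w, hw⟩, ?_⟩
    rw [← inv_inj, mul_inv_rev, inv_inv] at h'
    refine QuotientGroup.eq.mpr ?_
    rw [inv_inv, h', mul_inv_cancel_left]
    exact H.inv_mem hu
  exact Subgroup.finiteIndex_of_finite_quotient

/-- The finite generating set used for detours: `S` enlarged by a finite set `A`, symmetrized. -/
def sym (S A : Set G) : Set G := (S ∪ A) ∪ (S ∪ A)⁻¹

lemma sym_finite {S A : Set G} (hS : S.Finite) (hA : A.Finite) : (sym S A).Finite :=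
  (hS.union hA).union (hS.union hA).inv

lemma sym_inv {S A : Set G} : ∀ s ∈ sym S A, s⁻¹ ∈ sym S A := by
  rintro s (h | h)
  · exact Or.inr (by simpa using h)
  · exact Or.inl h

lemma subset_sym {S A : Set G} : S ⊆ sym S A := fun _ h => Or.inl (Or.inl h)

lemma mem_sym {S A : Set G} {a : G} (h : a ∈ A) : a ∈ sym S A := Or.inl (Or.inr h)

lemma p_lipschitz (X : Ext k G) (hTfin : T.Finite)
    (hT : Subgroup.closure T = ⊤) (hT' : ∀ s ∈ T, s⁻¹ ∈ T) :
    ∃ C : ℕ, ∀ g, (X.p g).natAbs ≤ C * wd T 1 1 g := by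
  obtain ⟨C, hC⟩ := (hTfin.image (fun g => (X.p g).natAbs)).bddAbove
  refine ⟨C, fun g => wd_lipschitz (f := fun g => (X.p g).natAbs) ?_ ?_ hT hT' g⟩
  · simp [X.p_one]
  · intro g s hs
    have h1 : (X.p s).natAbs ≤ C := hC (Set.mem_image_of_mem _ hs)
    simp only [X.p_mul]
    omega

/-- If elements `z` arbitrarily far from `H` conjugate a fixed `h` into `H`, with word lengths of
`z h^n z⁻¹` growing linearly in `n` uniformly in `z`, then `H` is not strongly quasiconvex: the path
`z · h^n · z⁻¹` is a detour. -/
lemma no_far_conj (hS : Subgroup.closure S = ⊤) (hSfin : S.Finite)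
    (hsqc : StronglyQuasiconvexIn (fun x y => (wordDist S x y : ℝ)) (H : Set G))
    (hTfin : T.Finite) (hST : S ⊆ T) (hT' : ∀ s ∈ T, s⁻¹ ∈ T)
    (Z : Set G) (h : G) (hhT : h ∈ T) (hZ : ∀ z ∈ Z, z * h * z⁻¹ ∈ H)
    (C : ℕ) (hC : ∀ z ∈ Z, ∀ n : ℕ, n ≤ C * wd T 1 1 (z * h ^ n * z⁻¹))
    (hfar : ∀ E : Set G, E.Finite → ∃ z ∈ Z, ¬ ∃ u ∈ H, ∃ w ∈ E, z = u * w) : False := by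
  have hT : Subgroup.closure T = ⊤ := top_le_iff.mp (hS ▸ Subgroup.closure_mono hST)
  obtain ⟨E, hE, hno⟩ := no_detour hS hSfin hsqc hTfin hST hT' (4 * (C + 1) + 1)
  obtain ⟨z, hz, hzE⟩ := hfar E hE
  have hpow : ∀ i : ℕ, z * h ^ i * z⁻¹ ∈ H := by
    intro i
    rw [← conj_pow]
    exact H.pow_mem (hZ z hz) i
  set c := wd T 1 1 z with hc
  set c' := wd T 1 1 z⁻¹ with hc'
  set r := c + c' + 1 with hr
  set n := 4 * (C + 1) * r with hn
  set y := z * h ^ n * z⁻¹ with hy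
  have h4r : 4 * r ≤ wd T 1 1 y := by
    have h1 := hC z hz n
    rw [← hy] at h1
    have h2 : (C + 1) * (4 * r) ≤ (C + 1) * wd T 1 1 y := by
      calc (C + 1) * (4 * r) = n := by rw [hn]; ring
        _ ≤ C * wd T 1 1 y := h1
        _ ≤ _ := Nat.mul_le_mul_right _ (Nat.le_succ C)
    exact Nat.le_of_mul_le_mul_left h2 (Nat.succ_pos C)
  refine hno r (by omega) y (hpow n) h4r
    {g | r ≤ wd T 1 1 g → r ≤ wd T 1 g y → ¬ ∃ u ∈ H, ∃ w ∈ E, g = u * w}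
    (fun g hg => hg) (c + n + c') ?_ ?_
  · calc c + n + c' ≤ n + r := by omega
      _ = _ := by rw [hn]; ring
  · have p1 : WPath T {g | r ≤ wd T 1 1 g → r ≤ wd T 1 g y → ¬ ∃ u ∈ H, ∃ w ∈ E, g = u * w}
        1 c 1 z := by
      refine (wpath_wd hT hT' 1 z).stay_start ?_
      intro g hg h1
      omega
    have p2 : WPath T {g | r ≤ wd T 1 1 g → r ≤ wd T 1 g y → ¬ ∃ u ∈ H, ∃ w ∈ E, g = u * w}
        1 n z (z * h ^ n) := by
      refine WPath.pow hhT ?_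
      rintro i - - - ⟨u, hu, w, hw, h'⟩
      refine hzE ⟨(z * h ^ i * z⁻¹)⁻¹ * u, H.mul_mem (H.inv_mem (hpow i)) hu, w, hw, ?_⟩
      rw [mul_assoc _ u w, ← h']
      group
    have h5 : wd T 1 (z * h ^ n) y = c' := by
      have := wd_mul_left hT hT' (z * h ^ n) 1 z⁻¹
      rwa [mul_one] at this
    have p3 : WPath T {g | r ≤ wd T 1 1 g → r ≤ wd T 1 g y → ¬ ∃ u ∈ H, ∃ w ∈ E, g = u * w}
        1 c' (z * h ^ n) y := by
      have h6 := wpath_wd (ρ := 1) hT hT' (z * h ^ n) y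
      rw [h5] at h6
      refine h6.stay_end hT hT' ?_
      intro g hg _ h2
      omega
    exact (p1.trans p2).trans p3

/-- If conjugation by `h ∈ H` both expands and contracts `ℤ^k` transversally to `H`, then `H` is
not strongly quasiconvex: for `a = ν e'`, `b = ν e` the commutator relation
`[a, h^n b h⁻ⁿ] = 1` gives the detour `a · h^n · b · h⁻ⁿ · a⁻¹ · h^n · b⁻¹` from `1` to `h^n`. -/
lemma no_hyperbolic (X : Ext k G) (hS : Subgroup.closure S = ⊤) (hSfin : S.Finite)
    (hsqc : StronglyQuasiconvexIn (fun x y => (wordDist S x y : ℝ)) (H : Set G))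
    (h : G) (hh : h ∈ H) (hp : X.p h ≠ 0)
    (Ψ : (Fin k → ℤ) ≃+ (Fin k → ℤ)) (hΨ : ∀ z, X.ν (Ψ z) = h * X.ν z * h⁻¹)
    (lam : ℂ) (φ : (Fin k → ℤ) →+ ℂ) (e : Fin k → ℤ) (hlam : 1 < ‖lam‖) (he : φ e ≠ 0)
    (hφ : ∀ b, X.ν b ∈ H → φ b = 0) (hφΨ : ∀ v, φ (Ψ v) = lam * φ v)
    (mu : ℂ) (ψ : (Fin k → ℤ) →+ ℂ) (e' : Fin k → ℤ) (hmu : ‖mu‖ < 1) (hmu0 : mu ≠ 0)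
    (he' : ψ e' ≠ 0)
    (hψ : ∀ b, X.ν b ∈ H → ψ b = 0) (hψΨ : ∀ v, ψ (Ψ v) = mu * ψ v) : False := by
  set T := sym S {h, X.ν e, X.ν e'} with hTdef
  have hTfin : T.Finite := sym_finite hSfin (by simp)
  have hST : S ⊆ T := subset_sym
  have hT' : ∀ s ∈ T, s⁻¹ ∈ T := sym_inv
  have hT : Subgroup.closure T = ⊤ := top_le_iff.mp (hS ▸ Subgroup.closure_mono hST)
  have hhT : h ∈ T := mem_sym (by simp)
  have heT : X.ν e ∈ T := mem_sym (by simp)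
  have he'T : X.ν e' ∈ T := mem_sym (by simp)
  obtain ⟨C, hC⟩ := p_lipschitz X hTfin hT hT'
  obtain ⟨E, hE, hno⟩ := no_detour hS hSfin hsqc hTfin hST hT' (12 * (C + 1) + 4)
  -- functionals vanishing on `H ∩ ℤ^k` are bounded near `H`
  have hbdd : ∀ f : (Fin k → ℤ) →+ ℂ, (∀ b, X.ν b ∈ H → f b = 0) →
      ∃ D : ℝ, ∀ z, (∃ u ∈ H, ∃ w ∈ E, X.ν z = u * w) → ‖f z‖ ≤ D := by
    intro f hf
    have hfin : (⋃ w ∈ E, {x : ℝ | ∃ z, (∃ u ∈ H, X.ν z = u * w) ∧ ‖f z‖ = x}).Finite := by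
      refine hE.biUnion fun w _ => Set.Subsingleton.finite ?_
      rintro _ ⟨z, ⟨u, hu, hz⟩, rfl⟩ _ ⟨z', ⟨u', hu', hz'⟩, rfl⟩
      have : f (z - z') = 0 := by
        apply hf
        rw [X.ν_sub, hz, hz', mul_inv_rev, mul_assoc, mul_inv_cancel_left]
        exact H.mul_mem hu (H.inv_mem hu')
      rw [map_sub, sub_eq_zero] at this
      rw [this]
    obtain ⟨D, hD⟩ := hfin.bddAbove
    refine ⟨D, ?_⟩
    rintro z ⟨u, hu, w, hw, hz⟩
    exact hD (Set.mem_biUnion hw ⟨z, ⟨u, hu, hz⟩, rfl⟩)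
  obtain ⟨D₁, hD₁⟩ := hbdd φ hφ
  obtain ⟨D₂, hD₂⟩ := hbdd ψ hψ
  have hshift : ∀ (i : ℕ) (g : G), (∃ u ∈ H, ∃ w ∈ E, h ^ i * g = u * w) →
      ∃ u ∈ H, ∃ w ∈ E, g = u * w := by
    rintro i g ⟨u, hu, w, hw, h'⟩
    exact ⟨(h ^ i)⁻¹ * u, H.mul_mem (H.inv_mem (H.pow_mem hh i)) hu, w, hw, by
      rw [mul_assoc, ← h', inv_mul_cancel_left]⟩
  -- commutation rules
  have hA : ∀ (i : ℕ) z, X.ν (Ψ^[i] z) * h ^ i = h ^ i * X.ν z := by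
    intro i z
    induction i with
    | zero => simp
    | succ i ih =>
      rw [Function.iterate_succ_apply', hΨ, pow_succ', mul_assoc h (h ^ i), ← ih]
      group
  have hsymm : ∀ (i : ℕ) z, Ψ^[i] (Ψ.symm^[i] z) = z := fun i z =>
    (Function.LeftInverse.iterate Ψ.apply_symm_apply i) z
  have hB : ∀ (i : ℕ) z, X.ν z * h ^ i = h ^ i * X.ν (Ψ.symm^[i] z) := by
    intro i z
    rw [← hA, hsymm]
  have hφi : ∀ (i : ℕ) z, φ (Ψ^[i] z) = lam ^ i * φ z := by
    intro i z
    induction i with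
    | zero => simp
    | succ i ih => rw [Function.iterate_succ_apply', hφΨ, ih]; ring
  have hψi : ∀ (i : ℕ) z, ψ (Ψ^[i] z) = mu ^ i * ψ z := by
    intro i z
    induction i with
    | zero => simp
    | succ i ih => rw [Function.iterate_succ_apply', hψΨ, ih]; ring
  have hφs : ∀ (i : ℕ) z, ‖φ (Ψ.symm^[i] z)‖ ≤ ‖φ z‖ := by
    intro i z
    have h1 := hφi i (Ψ.symm^[i] z)
    rw [hsymm] at h1
    rw [h1, norm_mul, norm_pow]
    exact le_mul_of_one_le_left (norm_nonneg _) (one_le_pow₀ hlam.le)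
  have hψs : ∀ (i : ℕ) z, ‖ψ (Ψ.symm^[i] z)‖ = (‖mu‖⁻¹) ^ i * ‖ψ z‖ := by
    intro i z
    have h1 := hψi i (Ψ.symm^[i] z)
    rw [hsymm] at h1
    rw [h1, norm_mul, norm_pow, ← mul_assoc, ← mul_pow, inv_mul_cancel₀ (norm_ne_zero_iff.mpr hmu0),
      one_pow, one_mul]
  have hmu1 : 1 < ‖mu‖⁻¹ := (one_lt_inv₀ (norm_pos_iff.mpr hmu0)).mpr hmu
  set D : ℝ := max D₁ D₂ + ‖φ e'‖ + ‖ψ e‖ with hD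
  have hgrow : ∀ x : ℝ, 1 < x → ∀ a : ℝ, 0 < a → ∃ r₀ : ℕ, ∀ i ≥ r₀, D < x ^ i * a := by
    intro x hx a ha
    have := (tendsto_pow_atTop_atTop_of_one_lt hx).atTop_mul_const ha
    exact Filter.eventually_atTop.mp (this.eventually_gt_atTop D)
  obtain ⟨r₁, hr₁⟩ := hgrow _ hlam _ (norm_pos_iff.mpr he)
  obtain ⟨r₂, hr₂⟩ := hgrow _ hmu1 _ (norm_pos_iff.mpr he')
  set r := r₁ + r₂ + 2 with hr
  set n := 4 * (C + 1) * r with hn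
  have hnr : 4 * r ≤ n := by rw [hn]; nlinarith
  have hDφ : D₁ + ‖φ e'‖ ≤ D := by
    have := le_max_left D₁ D₂
    have := norm_nonneg (ψ e)
    rw [hD]; linarith
  have hDψ : D₂ + ‖ψ e‖ ≤ D := by
    have := le_max_right D₁ D₂
    have := norm_nonneg (φ e')
    rw [hD]; linarith
  have h4r : 4 * r ≤ wd T 1 1 (h ^ n) := by
    have h1 := hC (h ^ n)
    rw [X.p_pow, Int.natAbs_mul, Int.natAbs_natCast] at h1
    have h3 : 1 ≤ (X.p h).natAbs := Int.natAbs_pos.mpr hp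
    have h2 : (C + 1) * (4 * r) ≤ (C + 1) * wd T 1 1 (h ^ n) := by
      calc (C + 1) * (4 * r) = n := by rw [hn]; ring
        _ ≤ n * (X.p h).natAbs := Nat.le_mul_of_pos_right _ h3
        _ ≤ C * wd T 1 1 (h ^ n) := h1
        _ ≤ _ := Nat.mul_le_mul_right _ (Nat.le_succ C)
    exact Nat.le_of_mul_le_mul_left h2 (Nat.succ_pos C)
  set V : Set G := {g | r ≤ wd T 1 1 g → r ≤ wd T 1 g (h ^ n) →
    ¬ ∃ u ∈ H, ∃ w ∈ E, g = u * w} with hV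
  have hV1 : ∀ i, X.ν e' * h ^ i ∈ V := by
    intro i h1 _ h3
    have h4 : wd T 1 1 (X.ν e' * h ^ i) ≤ i + 1 := by
      have q1 : WPath T Set.univ 1 (0 + 1) (1 : G) (1 * X.ν e') :=
        .step _ (.refl _) he'T trivial
      rw [one_mul] at q1
      have q2 : WPath T Set.univ 1 i (X.ν e') (X.ν e' * h ^ i) := WPath.pow hhT (by simp)
      have := wd_le (q1.trans q2)
      omega
    rw [hB] at h3
    have h5 := hD₂ _ (hshift i _ h3)
    rw [hψs] at h5
    have h6 := hr₂ i (by omega)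
    have := norm_nonneg (ψ e)
    linarith
  have hV2 : ∀ i ≤ n, X.ν e' * h ^ n * X.ν e * h⁻¹ ^ i ∈ V := by
    intro i hi _ _ h3
    have h4 : X.ν e' * h ^ n * X.ν e * h⁻¹ ^ i =
        h ^ (n - i) * X.ν (Ψ.symm^[n - i] e' + Ψ^[i] e) := by
      have e1 : h ^ n = h ^ (n - i) * h ^ i := by rw [← pow_add]; congr 1; omega
      rw [X.ν_add, ← mul_assoc, ← hB, e1, inv_pow]
      have := hA i e
      rw [← eq_mul_inv_iff_mul_eq] at this
      rw [this]
      group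
    rw [h4] at h3
    have h5 := hshift _ _ h3
    rcases Nat.lt_or_ge i r with hir | hir
    · have h6 := hD₂ _ h5
      have h7 := hr₂ (n - i) (by omega)
      rw [← hψs] at h7
      rw [map_add] at h6
      have h8 : ‖ψ (Ψ^[i] e)‖ ≤ ‖ψ e‖ := by
        rw [hψi, norm_mul, norm_pow]
        exact mul_le_of_le_one_left (norm_nonneg _) (pow_le_one₀ (norm_nonneg _) hmu.le)
      have h9 := norm_sub_norm_le (ψ (Ψ.symm^[n - i] e')) (-ψ (Ψ^[i] e))
      rw [norm_neg, sub_neg_eq_add] at h9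
      linarith
    · have h6 := hD₁ _ h5
      have h7 := hr₁ i (by omega)
      rw [map_add, add_comm] at h6
      have h8 := hφs (n - i) e'
      have h9 := norm_sub_norm_le (φ (Ψ^[i] e)) (-φ (Ψ.symm^[n - i] e'))
      rw [norm_neg, sub_neg_eq_add, hφi, norm_mul, norm_pow] at h9
      rw [hφi] at h6
      linarith
  have hV3 : ∀ i ≤ n, h ^ n * X.ν e * h⁻¹ ^ n * h ^ i ∈ V := by
    intro i hi _ h2 h3
    have e2 : h⁻¹ ^ n * h ^ i = (h ^ (n - i))⁻¹ := by
      have e1 : h ^ n = h ^ i * h ^ (n - i) := by rw [← pow_add]; congr 1; omega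
      rw [inv_pow, e1]; group
    have e3 : h ^ n * X.ν e * h⁻¹ ^ n * h ^ i = h ^ i * X.ν (Ψ^[n - i] e) := by
      rw [mul_assoc, e2]
      have e1 : h ^ n = h ^ i * h ^ (n - i) := by rw [← pow_add]; congr 1; omega
      have := hA (n - i) e
      rw [← eq_mul_inv_iff_mul_eq] at this
      rw [this, e1]
      group
    have h4 : wd T 1 (h ^ n * X.ν e * h⁻¹ ^ n * h ^ i) (h ^ n) ≤ n - i + 1 := by
      have q1 : WPath T Set.univ 1 (n - i) (h ^ n * X.ν e * h⁻¹ ^ n * h ^ i)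
          (h ^ n * X.ν e * h⁻¹ ^ n * h ^ i * h ^ (n - i)) := WPath.pow hhT (by simp)
      have q2 : h ^ n * X.ν e * h⁻¹ ^ n * h ^ i * h ^ (n - i) = h ^ n * X.ν e := by
        rw [mul_assoc _ (h⁻¹ ^ n) (h ^ i), e2]; group
      rw [q2] at q1
      have q3 := wd_le (q1.step (X.ν e)⁻¹ (hT' _ heT) trivial)
      rw [mul_inv_cancel_right] at q3
      exact q3
    rw [e3] at h3
    have h5 := hD₁ _ (hshift i _ h3)
    rw [hφi, norm_mul, norm_pow] at h5
    have h6 := hr₁ (n - i) (by omega)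
    have := norm_nonneg (φ e')
    linarith
  refine hno r (by omega) (h ^ n) (H.pow_mem hh n) h4r V (fun g hg => hg)
    (0 + 1 + n + 1 + n + 1 + n + 1) ?_ ?_
  · calc 0 + 1 + n + 1 + n + 1 + n + 1 = 3 * n + 4 := by ring
      _ ≤ 3 * n + 4 * r := by omega
      _ = _ := by rw [hn]; ring
  · have s0 : (1 : G) ∈ V := by
      intro h1
      rw [wd_self] at h1
      omega
    have s1 : WPath T V 1 (0 + 1) (1 : G) (1 * X.ν e') := .step _ (.refl _) he'T s0
    rw [one_mul] at s1
    have s2 := s1.trans (WPath.pow hhT (n := n) fun i _ => hV1 i)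
    have s3 := s2.step (X.ν e) heT (hV1 n)
    have s4 := s3.trans (WPath.pow (hT' _ hhT) (n := n) fun i hi => hV2 i hi.le)
    have s5 := s4.step (X.ν e')⁻¹ (hT' _ he'T) (hV2 n le_rfl)
    -- the commutator relation
    have e1 : X.ν e' * h ^ n * X.ν e * h⁻¹ ^ n * (X.ν e')⁻¹ = h ^ n * X.ν e * h⁻¹ ^ n := by
      have := hA n e
      rw [← eq_mul_inv_iff_mul_eq] at this
      have e2 : X.ν e' * h ^ n * X.ν e * h⁻¹ ^ n = X.ν e' * X.ν (Ψ^[n] e) := by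
        rw [this, inv_pow]; group
      rw [e2, X.ν_comm, mul_inv_cancel_right, this, inv_pow]
    rw [e1] at s5
    have s6 := s5.trans (WPath.pow hhT (n := n) fun i hi => hV3 i hi.le)
    have s7 := s6.step (X.ν e)⁻¹ (hT' _ heT) (hV3 n le_rfl)
    have e3 : h ^ n * X.ν e * h⁻¹ ^ n * h ^ n * (X.ν e)⁻¹ = h ^ n := by
      rw [inv_pow, inv_mul_cancel_right, mul_inv_cancel_right]
    rw [e3] at s7
    exact s7

end detours

/-! ### Subgroups of `ℤ^k` -/

section fibre

open scoped Pointwise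

variable {G : Type*} [Group G] {k : ℕ} {S T : Set G} {H : Subgroup G}

/-- The `ℓ¹`-norm on `ℤ^k`. -/
def len (z : Fin k → ℤ) : ℕ := ∑ i, (z i).natAbs

lemma len_add (a b : Fin k → ℤ) : len (a + b) ≤ len a + len b := by
  unfold len
  rw [← Finset.sum_add_distrib]
  exact Finset.sum_le_sum fun i _ => Int.natAbs_add_le _ _

lemma len_nsmul (n : ℕ) (a : Fin k → ℤ) : len (n • a) = n * len a := by
  unfold len
  rw [Finset.mul_sum]
  exact Finset.sum_congr rfl fun i _ => by simp [Int.natAbs_mul]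

lemma len_pos {a : Fin k → ℤ} (h : a ≠ 0) : 1 ≤ len a := by
  by_contra h'
  have h0 : len a = 0 := by omega
  apply h
  funext i
  have := (Finset.sum_eq_zero_iff.mp h0) i (Finset.mem_univ i)
  simpa using this

lemma WPath.eq_of_zero {V : Set G} {c : ℕ} {x y : G} (h : WPath T V 1 c x y) (hc : c = 0) :
    x = y := by
  cases h with
  | refl => rfl
  | step s _ _ _ => simp at hc

/-- A path inside a coset `g ℤ^k`, of length the `ℓ¹`-norm of its displacement. -/
lemma wpath_fibre (X : Ext k G) {V : Set G} (hT' : ∀ s ∈ T, s⁻¹ ∈ T)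
    (hbT : ∀ i, X.ν (Pi.single i 1) ∈ T) (g : G) (hV : ∀ z, g * X.ν z ∈ V) (z : Fin k → ℤ) :
    WPath T V 1 (len z) g (g * X.ν z) := by
  have h1 : ∀ (i : Fin k) (m : ℤ) (a : Fin k → ℤ),
      WPath T V 1 m.natAbs (g * X.ν a) (g * X.ν (a + Pi.single i m)) := by
    intro i m a
    have h2 : ∀ n : ℕ, (n • Pi.single i 1 : Fin k → ℤ) = Pi.single i (n : ℤ) := by
      intro n
      rw [← Pi.single_smul]
      simp
    obtain ⟨n, rfl | rfl⟩ := m.eq_nat_or_neg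
    · rw [X.ν_add, ← mul_assoc, ← h2, X.ν_nsmul, Int.natAbs_natCast]
      refine WPath.pow (hbT i) fun j _ => ?_
      rw [mul_assoc, ← X.ν_nsmul, ← X.ν_add]
      exact hV _
    · rw [X.ν_add, ← mul_assoc, Pi.single_neg, ← h2, X.ν_neg, X.ν_nsmul, Int.natAbs_neg,
        Int.natAbs_natCast, ← inv_pow]
      refine WPath.pow (hT' _ (hbT i)) fun j _ => ?_
      rw [mul_assoc, ← X.ν_neg, ← X.ν_nsmul, ← X.ν_add]
      exact hV _
  have h2 : ∀ s : Finset (Fin k), WPath T V 1 (∑ i ∈ s, (z i).natAbs) g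
      (g * X.ν (∑ i ∈ s, Pi.single i (z i))) := by
    intro s
    induction s using Finset.induction_on with
    | empty => simpa [X.ν_zero] using WPath.refl g
    | insert i s his ih =>
      rw [Finset.sum_insert his, Finset.sum_insert his, add_comm, add_comm (Pi.single i (z i) : Fin k → ℤ)]
      exact ih.trans (h1 i (z i) _)
  have := h2 Finset.univ
  rwa [Finset.univ_sum_single] at this

lemma exists_len_bound (X : Ext k G) {F : Set G} (hF : F.Finite) :
    ∃ C : ℕ, ∀ z, X.ν z ∈ F → len z ≤ C := by
  obtain ⟨C, hC⟩ := ((hF.preimage X.ν_inj.injOn).image len).bddAbove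
  exact ⟨C, fun z hz => hC ⟨z, hz, rfl⟩⟩

/-- A strongly quasiconvex subgroup of `ℤ^k` is undistorted: geodesics between its points stay
near it, so they can be pushed into it at bounded cost per step. -/
lemma undistorted (X : Ext k G) (hS : Subgroup.closure S = ⊤) (hSfin : S.Finite)
    (hsqc : StronglyQuasiconvexIn (fun x y => (wordDist S x y : ℝ)) (H : Set G))
    (hTfin : T.Finite) (hST : S ⊆ T) (hT' : ∀ s ∈ T, s⁻¹ ∈ T)
    (hH : ∀ h ∈ H, X.p h = 0) :
    ∃ C : ℕ, ∀ z, X.ν z ∈ H → len z ≤ C * (wd T 1 1 (X.ν z) + 2) := by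
  obtain ⟨E, hE, hnear⟩ := exists_near_of_weight hS hSfin hsqc hTfin hST hT' 1
  have hF : ((E * T * E⁻¹) ∪ E⁻¹ ∪ E : Set G).Finite :=
    (((hE.mul hTfin).mul hE.inv).union hE.inv).union hE
  obtain ⟨C, hC⟩ := exists_len_bound X hF
  refine ⟨C, fun z hz => ?_⟩
  obtain ⟨N, q, h0, hN, hq, hsum, hnr⟩ := hnear 1 (by simp) (by simp) 1 H.one_mem _ hz
  have hNwd : N = wd T 1 1 (X.ν z) := by simpa using hsum
  have key : ∀ i ≤ N, ∃ a, ∃ w ∈ E, q i = X.ν a * w ∧ len a ≤ C * (i + 1) := by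
    intro i
    induction i with
    | zero =>
      intro hi
      obtain ⟨u, hu, w, hw, h⟩ := hnr 0 hi
      obtain ⟨a, rfl⟩ := (X.p_eq_zero u).mp (hH u hu)
      refine ⟨a, w, hw, h, ?_⟩
      rw [h0] at h
      have h1 : X.ν a = w⁻¹ := eq_inv_of_mul_eq_one_left h.symm
      have := hC a (by rw [h1]; exact Or.inl (Or.inr (Set.inv_mem_inv.mpr hw)))
      simpa using this
    | succ i ih =>
      intro hi
      obtain ⟨a, w, hw, h, hla⟩ := ih (by omega)
      obtain ⟨u, hu, w', hw', h'⟩ := hnr (i + 1) hi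
      obtain ⟨a', rfl⟩ := (X.p_eq_zero u).mp (hH u hu)
      obtain ⟨s, hs, hqs⟩ := hq i (by omega)
      refine ⟨a', w', hw', h', ?_⟩
      have h1 : X.ν (a' - a) = w * s * w'⁻¹ := by
        rw [h', h] at hqs
        rw [X.ν_sub, ← X.ν_neg, X.ν_comm, X.ν_neg, eq_mul_inv_of_mul_eq hqs]
        group
      have h2 := hC (a' - a) (by
        rw [h1]
        exact Or.inl (Or.inl (Set.mul_mem_mul (Set.mul_mem_mul hw hs) (Set.inv_mem_inv.mpr hw'))))
      have h3 := len_add (a' - a) a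
      rw [sub_add_cancel] at h3
      calc len a' ≤ C + C * (i + 1) := by omega
        _ = _ := by ring
  obtain ⟨a, w, hw, h, hla⟩ := key N le_rfl
  rw [hN] at h
  have h1 : X.ν (z - a) = w := by
    rw [X.ν_sub, ← X.ν_neg, X.ν_comm, X.ν_neg, h, inv_mul_cancel_left]
  have h2 := hC (z - a) (by rw [h1]; exact Or.inr hw)
  have h3 := len_add (z - a) a
  rw [sub_add_cancel] at h3
  rw [← hNwd]
  calc len z ≤ C + C * (N + 1) := by omega
    _ = _ := by ring

/-- If `H ≤ ℤ^k` has infinite index in `ℤ^k`, translating a line of `H` by elements of `ℤ^k` far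
from `H` gives detours. -/
lemma no_fibre_infinite (X : Ext k G) (hS : Subgroup.closure S = ⊤) (hSfin : S.Finite)
    (hsqc : StronglyQuasiconvexIn (fun x y => (wordDist S x y : ℝ)) (H : Set G))
    (hH : ∀ h ∈ H, X.p h = 0) (β : Fin k → ℤ) (hβ : β ≠ 0) (hβH : X.ν β ∈ H)
    (hfar : ∀ E : Set G, E.Finite → ∃ z, ¬ ∃ u ∈ H, ∃ w ∈ E, X.ν z = u * w) : False := by
  have hTfin : (sym S {X.ν β}).Finite := sym_finite hSfin (by simp)
  have hT : Subgroup.closure (sym S {X.ν β}) = ⊤ :=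
    top_le_iff.mp (hS ▸ Subgroup.closure_mono subset_sym)
  have hconj : ∀ (z : Fin k → ℤ) (n : ℕ), X.ν z * X.ν β ^ n * (X.ν z)⁻¹ = X.ν β ^ n := by
    intro z n
    rw [← X.ν_nsmul, X.ν_comm, mul_inv_cancel_right]
  obtain ⟨C, hC⟩ := undistorted X hS hSfin hsqc hTfin subset_sym sym_inv hH
  refine no_far_conj hS hSfin hsqc hTfin subset_sym sym_inv (Set.range X.ν) (X.ν β)
    (mem_sym rfl) ?_ (3 * C) ?_ ?_
  · rintro _ ⟨z, rfl⟩
    have := hconj z 1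
    rw [pow_one] at this
    rwa [this]
  · rintro _ ⟨z, rfl⟩ n
    rw [hconj]
    have h1 := hC (n • β) (by rw [X.ν_nsmul]; exact H.pow_mem hβH n)
    rw [len_nsmul, X.ν_nsmul] at h1
    rcases Nat.eq_zero_or_pos n with rfl | hn
    · simp
    have h2 : 1 ≤ wd (sym S {X.ν β}) 1 1 (X.ν β ^ n) := by
      by_contra h
      have h3 := (wpath_wd (ρ := 1) hT sym_inv 1 (X.ν β ^ n)).eq_of_zero (by omega)
      rw [← X.ν_nsmul, ← X.ν_zero] at h3
      have h4 := X.ν_inj h3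
      rcases smul_eq_zero.mp h4.symm with h5 | h5
      · omega
      · exact hβ h5
    have h3 := len_pos hβ
    calc n ≤ n * len β := Nat.le_mul_of_pos_right _ h3
      _ ≤ _ := h1
      _ ≤ C * (3 * wd (sym S {X.ν β}) 1 1 (X.ν β ^ n)) := Nat.mul_le_mul_left _ (by omega)
      _ = _ := by ring
  · intro E hE
    obtain ⟨z, hz⟩ := hfar E hE
    exact ⟨_, ⟨z, rfl⟩, hz⟩

/-- If `H` has finite index in `ℤ^k`, then all of `ℤ^k` is undistorted, and moving a line of `H` to
a far coset `t^D ℤ^k` gives a detour. -/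
lemma no_fibre_finite (X : Ext k G) (hS : Subgroup.closure S = ⊤) (hSfin : S.Finite)
    (hsqc : StronglyQuasiconvexIn (fun x y => (wordDist S x y : ℝ)) (H : Set G))
    (hH : ∀ h ∈ H, X.p h = 0) (β : Fin k → ℤ) (hβ : β ≠ 0) (hβH : X.ν β ∈ H)
    {E₀ : Set G} (hE₀ : E₀.Finite) (hcov : ∀ z, ∃ u ∈ H, ∃ w ∈ E₀, X.ν z = u * w) : False := by
  set T := sym S (insert X.t (Set.range fun i => X.ν (Pi.single i 1))) with hTdef
  have hTfin : T.Finite := sym_finite hSfin ((Set.finite_range _).insert _)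
  have hST : S ⊆ T := subset_sym
  have hT' : ∀ s ∈ T, s⁻¹ ∈ T := sym_inv
  have hT : Subgroup.closure T = ⊤ := top_le_iff.mp (hS ▸ Subgroup.closure_mono hST)
  have htT : X.t ∈ T := mem_sym (by simp)
  have hbT : ∀ i, X.ν (Pi.single i 1) ∈ T := fun i => mem_sym (Or.inr ⟨i, rfl⟩)
  obtain ⟨C, hC⟩ := undistorted X hS hSfin hsqc hTfin hST hT' hH
  obtain ⟨A, hA⟩ := exists_len_bound X hE₀
  obtain ⟨A', hA'⟩ := (hE₀.image (fun w => wd T 1 1 w⁻¹)).bddAbove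
  have hZ : ∃ C₁ : ℕ, ∀ z, len z ≤ C₁ * (wd T 1 1 (X.ν z) + 1) := by
    refine ⟨A + C * (A' + 2), fun z => ?_⟩
    obtain ⟨u, hu, w, hw, h⟩ := hcov z
    obtain ⟨a, rfl⟩ := (X.p_eq_zero u).mp (hH u hu)
    have h1 : X.ν (z - a) = w := by
      rw [X.ν_sub, ← X.ν_neg, X.ν_comm, X.ν_neg, h, inv_mul_cancel_left]
    have h2 := hA (z - a) (by rw [h1]; exact hw)
    have h3 := len_add (z - a) a
    rw [sub_add_cancel] at h3
    have h4 := hC a hu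
    have h5 : wd T 1 (X.ν z) (X.ν a) ≤ A' := by
      have h6 := wd_mul_left hT hT' (X.ν z) 1 w⁻¹
      have h7 : X.ν z * w⁻¹ = X.ν a := by rw [h, mul_inv_cancel_right]
      rw [mul_one, h7] at h6
      rw [h6]
      exact hA' ⟨w, hw, rfl⟩
    have h6 := wd_triangle (ρ := 1) hT hT' 1 (X.ν z) (X.ν a)
    set d := wd T 1 1 (X.ν z)
    calc len z ≤ A + C * (wd T 1 1 (X.ν a) + 2) := by omega
      _ ≤ A + C * (d + A' + 2) := by gcongr; omega
      _ ≤ _ := by nlinarith [Nat.zero_le (A * d), Nat.zero_le (C * A' * d), Nat.zero_le (C * d)]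
  obtain ⟨C₁, hC₁⟩ := hZ
  obtain ⟨E, hE, hno⟩ := no_detour hS hSfin hsqc hTfin hST hT' (2 + 10 * C₁)
  obtain ⟨D₀, hD₀⟩ := (hE.image (fun w => (X.p w).natAbs)).bddAbove
  set D := D₀ + 1 with hD
  set j := (C₁ + 1) * (4 * D + 5) with hj
  set y := X.ν β ^ j with hy
  have hyν : X.ν (j • β) = y := X.ν_nsmul j β
  set n := wd T 1 1 y with hn
  have hnD : 4 * D + 4 ≤ n := by
    have h1 := hC₁ (j • β)
    rw [len_nsmul, hyν] at h1
    have h2 : (C₁ + 1) * (4 * D + 5) ≤ (C₁ + 1) * (n + 1) := by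
      calc (C₁ + 1) * (4 * D + 5) = j := hj.symm
        _ ≤ j * len β := Nat.le_mul_of_pos_right _ (len_pos hβ)
        _ ≤ _ := h1
        _ ≤ _ := Nat.mul_le_mul_right _ (Nat.le_succ _)
    have := Nat.le_of_mul_le_mul_left h2 (Nat.succ_pos _)
    omega
  set r := n / 4 with hr
  have hrD : D + 1 ≤ r := by omega
  have hpow : ∀ (x s : G) (m : ℕ), s ∈ T → wd T 1 x (x * s ^ m) ≤ m := fun x s m hs =>
    wd_le (WPath.pow hs (by simp))
  obtain ⟨z, hz⟩ : ∃ z, X.ν z = (X.t ^ D)⁻¹ * y * X.t ^ D := by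
    rw [← X.p_eq_zero, X.p_mul, X.p_mul, X.p_inv, ← hyν, X.p_ν]
    ring
  have hz' : X.t ^ D * X.ν z = y * X.t ^ D := by rw [hz]; group
  have hlen : len z ≤ C₁ * (10 * r) := by
    have h1 : wd T 1 1 (X.ν z) ≤ D + n + D := by
      have h2 := hpow 1 X.t⁻¹ D (hT' _ htT)
      rw [one_mul, inv_pow] at h2
      have h3 := wd_mul_left hT hT' (X.t ^ D)⁻¹ 1 y
      rw [mul_one] at h3
      have h4 := hpow ((X.t ^ D)⁻¹ * y) X.t D htT
      rw [← hz] at h4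
      have h5 := wd_triangle (ρ := 1) hT hT' 1 (X.t ^ D)⁻¹ ((X.t ^ D)⁻¹ * y)
      have h6 := wd_triangle (ρ := 1) hT hT' 1 ((X.t ^ D)⁻¹ * y) (X.ν z)
      omega
    exact (hC₁ z).trans (Nat.mul_le_mul_left _ (by omega))
  set V : Set G := {g | r ≤ wd T 1 1 g → r ≤ wd T 1 g y →
    ¬ ∃ u ∈ H, ∃ w ∈ E, g = u * w} with hV
  refine hno r (by omega) y (H.pow_mem hβH j) (by omega) V (fun g hg => hg)
    (D + len z + D) ?_ ?_
  · calc D + len z + D ≤ 2 * r + C₁ * (10 * r) := by omega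
      _ = _ := by ring
  · have p1 : WPath T V 1 D 1 (1 * X.t ^ D) := by
      refine WPath.pow htT fun i hi h1 => ?_
      have := hpow 1 X.t i htT
      omega
    rw [one_mul] at p1
    have p2 : WPath T V 1 (len z) (X.t ^ D) (X.t ^ D * X.ν z) := by
      refine wpath_fibre X hT' hbT _ ?_ z
      rintro z' - - ⟨u, hu, w, hw, h⟩
      -- the two sides have different projections to `ℤ`
      have h1 := congrArg X.p h
      rw [X.p_mul, X.p_mul, X.p_ν, hH u hu, X.p_pow, X.p_t] at h1
      have h2 : (X.p w).natAbs ≤ D₀ := hD₀ ⟨w, hw, rfl⟩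
      omega
    rw [hz'] at p2
    have p3 : WPath T V 1 D (y * X.t ^ D) (y * X.t ^ D * X.t⁻¹ ^ D) := by
      refine WPath.pow (hT' _ htT) fun i hi _ h2 => ?_
      have h3 : y * X.t ^ D * X.t⁻¹ ^ i * X.t⁻¹ ^ (D - i) = y := by
        rw [mul_assoc _ (X.t⁻¹ ^ i), ← pow_add, show i + (D - i) = D by omega, inv_pow,
          mul_inv_cancel_right]
      have h4 := hpow (y * X.t ^ D * X.t⁻¹ ^ i) X.t⁻¹ (D - i) (hT' _ htT)
      rw [h3] at h4
      omega
    rw [inv_pow, mul_inv_cancel_right] at p3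
    exact (p1.trans p2).trans p3

end fibre

/-! ### Subgroups projecting nontrivially to `ℤ` -/

section transverse

variable {G : Type*} [Group G] {k : ℕ} {S : Set G} {H : Subgroup G}

lemma finiteIndex_of_cover_fibre (X : Ext k G) {h : G} (hh : h ∈ H) (hp : X.p h ≠ 0)
    {E : Set G} (hE : E.Finite) (hcov : ∀ z, ∃ u ∈ H, ∃ w ∈ E, X.ν z = u * w) :
    H.FiniteIndex := by
  have hF : (Set.image2 (fun w (i : ℕ) => w * X.t ^ i) E
      (Set.Iic (X.p h).natAbs)).Finite := hE.image2 _ (Set.finite_Iic _)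
  refine finiteIndex_of_cover hF fun g => ?_
  set a := X.p g / X.p h with ha
  obtain ⟨i, hi⟩ := Int.eq_ofNat_of_zero_le (Int.emod_nonneg (X.p g) hp)
  have hlt := Int.emod_lt_abs (X.p g) hp
  rw [Int.abs_eq_natAbs] at hlt
  have hdiv := Int.emod_add_mul_ediv (X.p g) (X.p h)
  obtain ⟨z, hz⟩ : ∃ z, X.ν z = (h ^ a)⁻¹ * g * (X.t ^ i)⁻¹ := by
    rw [← X.p_eq_zero, X.p_mul, X.p_mul, X.p_inv, X.p_inv, X.p_zpow, X.p_pow, X.p_t]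
    rw [mul_comm] at hdiv
    rw [ha]
    omega
  obtain ⟨u, hu, w, hw, huw⟩ := hcov z
  refine ⟨h ^ a * u, H.mul_mem (H.zpow_mem hh a) hu, _, ⟨w, hw, i, ?_, rfl⟩, ?_⟩
  · simp only [Set.mem_Iic]
    omega
  · have : g = h ^ a * X.ν z * X.t ^ i := by rw [hz]; group
    rw [this, huw]
    group

/-- If a power of `h` centralizes a direction `e` of `ℤ^k` modulo `H`, and no positive multiple of
`e` is in `H`, then conjugating that power by large multiples of `e` gives detours. -/
lemma no_periodic (X : Ext k G) (hS : Subgroup.closure S = ⊤) (hSfin : S.Finite)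
    (hsqc : StronglyQuasiconvexIn (fun x y => (wordDist S x y : ℝ)) (H : Set G))
    (h : G) (hh : h ∈ H) (hp : X.p h ≠ 0)
    (Ψ : (Fin k → ℤ) ≃+ (Fin k → ℤ)) (hΨ : ∀ z, X.ν (Ψ z) = h * X.ν z * h⁻¹)
    (j : ℕ) (hj : 1 ≤ j) (e : Fin k → ℤ) (he : ∀ l : ℕ, 1 ≤ l → X.ν (l • e) ∉ H)
    (hje : X.ν (Ψ^[j] e - e) ∈ H) : False := by
  have hTfin : (sym S {h ^ j}).Finite := sym_finite hSfin (by simp)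
  have hT : Subgroup.closure (sym S {h ^ j}) = ⊤ :=
    top_le_iff.mp (hS ▸ Subgroup.closure_mono subset_sym)
  obtain ⟨C, hC⟩ := p_lipschitz X hTfin hT sym_inv
  have hA : ∀ (i : ℕ) z, X.ν (Ψ^[i] z) = h ^ i * X.ν z * (h ^ i)⁻¹ := by
    intro i z
    induction i with
    | zero => simp
    | succ i ih =>
      rw [Function.iterate_succ_apply', hΨ, ih, pow_succ']
      group
  refine no_far_conj hS hSfin hsqc hTfin subset_sym sym_inv
    (Set.range fun l : ℕ => X.ν (l • e)) (h ^ j) (mem_sym rfl) ?_ C ?_ ?_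
  · rintro _ ⟨l, rfl⟩
    have h1 : X.ν (l • (Ψ^[j] e - e)) ∈ H := by
      rw [X.ν_nsmul]
      exact H.pow_mem hje l
    have h2 : l • Ψ^[j] e = Ψ^[j] (l • e) := by
      have : ∀ i : ℕ, l • Ψ^[i] e = Ψ^[i] (l • e) := by
        intro i
        induction i with
        | zero => rfl
        | succ i ih =>
          rw [Function.iterate_succ_apply', Function.iterate_succ_apply', ← ih, map_nsmul]
      exact this j
    rw [smul_sub, X.ν_sub, h2, hA] at h1
    have h3 : X.ν (l • e) * h ^ j * (X.ν (l • e))⁻¹ =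
        (h ^ j * X.ν (l • e) * (h ^ j)⁻¹ * (X.ν (l • e))⁻¹)⁻¹ * h ^ j := by group
    change X.ν (l • e) * h ^ j * (X.ν (l • e))⁻¹ ∈ H
    rw [h3]
    exact H.mul_mem (H.inv_mem h1) (H.pow_mem hh j)
  · rintro _ ⟨l, rfl⟩ n
    refine le_trans ?_ (hC _)
    rw [X.p_mul, X.p_mul, X.p_inv, X.p_ν, X.p_pow, X.p_pow]
    simp only [zero_add, neg_zero, add_zero, Int.natAbs_mul, Int.natAbs_natCast]
    exact Nat.le_mul_of_pos_right _ (Nat.mul_pos hj (Int.natAbs_pos.mpr hp))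
  · intro E hE
    by_contra hcon
    push Not at hcon
    have hcon' : ∀ l : ℕ, ∃ w ∈ E, ∃ u ∈ H, X.ν (l • e) = u * w := by
      intro l
      obtain ⟨u, hu, w, hw, h'⟩ := hcon _ ⟨l, rfl⟩
      exact ⟨w, hw, u, hu, h'⟩
    choose f hfE hf using hcon'
    have hno : ∀ l l', l < l' → f l ≠ f l' := by
      intro l l' hlt hff
      obtain ⟨u, hu, h1⟩ := hf l
      obtain ⟨u', hu', h2⟩ := hf l'
      refine he (l' - l) (by omega) ?_
      have h3 : (l' - l) • e = l' • e - l • e := by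
        rw [eq_sub_iff_add_eq, ← add_smul, Nat.sub_add_cancel hlt.le]
      rw [h3, X.ν_sub, h1, h2, hff, mul_inv_rev, mul_assoc, mul_inv_cancel_left]
      exact H.mul_mem hu' (H.inv_mem hu)
    have hinj : Function.Injective f := by
      intro l l' hff
      rcases lt_trichotomy l l' with h1 | h1 | h1
      · exact absurd hff (hno _ _ h1)
      · exact h1
      · exact absurd hff.symm (hno _ _ h1)
    exact Set.infinite_of_injective_forall_mem hinj hfE hE

lemma finiteIndex_of_transverse (X : Ext k G) (hS : Subgroup.closure S = ⊤) (hSfin : S.Finite)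
    (hsqc : StronglyQuasiconvexIn (fun x y => (wordDist S x y : ℝ)) (H : Set G))
    (h : G) (hh : h ∈ H) (hp : X.p h ≠ 0) : H.FiniteIndex := by
  let B : AddSubgroup (Fin k → ℤ) :=
    { carrier := {z | X.ν z ∈ H}
      add_mem' := fun {a b} ha hb => by
        change X.ν (a + b) ∈ H
        rw [X.ν_add]
        exact H.mul_mem ha hb
      zero_mem' := by simp [X.ν_zero]
      neg_mem' := fun {a} ha => by
        change X.ν (-a) ∈ H
        rw [X.ν_neg]
        exact H.inv_mem ha }
  have hBmem : ∀ z, z ∈ B ↔ X.ν z ∈ H := fun z => Iff.rfl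
  by_cases hfin : Finite ((Fin k → ℤ) ⧸ B)
  · -- representatives of `ℤ^k / B` cover `ℤ^k` modulo `H`
    refine finiteIndex_of_cover_fibre X hh hp
      (E := Set.range fun q : (Fin k → ℤ) ⧸ B => X.ν q.out) (Set.finite_range _) fun z => ?_
    refine ⟨X.ν (z - (QuotientAddGroup.mk z : (Fin k → ℤ) ⧸ B).out), ?_, _,
      ⟨QuotientAddGroup.mk z, rfl⟩, ?_⟩
    · rw [← hBmem]
      have h1 : -(QuotientAddGroup.mk z : (Fin k → ℤ) ⧸ B).out + z ∈ B :=
        QuotientAddGroup.eq.mp (Quotient.out_eq _)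
      rwa [neg_add_eq_sub] at h1
    · rw [← X.ν_add, sub_add_cancel]
  · exfalso
    obtain ⟨Ψ, hΨ⟩ := X.exists_conj h
    have hB : ∀ b, Ψ b ∈ B ↔ b ∈ B := by
      intro b
      rw [hBmem, hBmem, hΨ, Subgroup.mul_mem_cancel_right _ (H.inv_mem hh),
        Subgroup.mul_mem_cancel_left _ hh]
    rcases dichotomy B Ψ hB hfin with ⟨j, hj, e, he, hje⟩ |
      ⟨⟨lam, φ, e, hlam, he, hφ, hφΨ⟩, ⟨mu, ψ, e', hmu, hmu0, he', hψ, hψΨ⟩⟩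
    · exact no_periodic X hS hSfin hsqc h hh hp Ψ hΨ j hj e he hje
    · exact no_hyperbolic X hS hSfin hsqc h hh hp Ψ hΨ lam φ e hlam he hφ hφΨ mu ψ e' hmu hmu0
        he' hψ hψΨ

lemma trivial_or_finiteIndex (X : Ext k G) (hS : Subgroup.closure S = ⊤) (hSfin : S.Finite)
    (hsqc : StronglyQuasiconvexIn (fun x y => (wordDist S x y : ℝ)) (H : Set G)) :
    H = ⊥ ∨ H.FiniteIndex := by
  by_cases hH : ∀ h ∈ H, X.p h = 0
  · left
    by_contra hne
    obtain ⟨⟨b, hb⟩, hb1⟩ := H.ne_bot_iff_exists_ne_one.mp hne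
    have hb1 : b ≠ 1 := fun h => hb1 (Subtype.ext h)
    obtain ⟨β, hβ⟩ := (X.p_eq_zero _).mp (hH _ hb)
    rw [← hβ] at hb hb1
    have hβ0 : β ≠ 0 := by
      rintro rfl
      exact hb1 X.ν_zero
    by_cases hfar : ∀ E : Set G, E.Finite → ∃ z, ¬ ∃ u ∈ H, ∃ w ∈ E, X.ν z = u * w
    · exact no_fibre_infinite X hS hSfin hsqc hH β hβ0 hb hfar
    · push Not at hfar
      obtain ⟨E₀, hE₀, hcov⟩ := hfar
      exact no_fibre_finite X hS hSfin hsqc hH β hβ0 hb hE₀ hcov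
  · push Not at hH
    obtain ⟨h, hh, hp⟩ := hH
    exact Or.inr (finiteIndex_of_transverse X hS hSfin hsqc h hh hp)

end transverse

/-- The semidirect product `ℤ^k ⋊[Φ] ℤ` as an extension of `ℤ` by `ℤ^k`. -/
def extOf {k : ℕ} (Φ : AddAut (Fin k → ℤ)) :
    Ext k (Multiplicative (Fin k → ℤ) ⋊[zdAction Φ] Multiplicative ℤ) where
  ν z := SemidirectProduct.inl (Multiplicative.ofAdd z)
  p g := Multiplicative.toAdd g.right
  t := SemidirectProduct.inr (Multiplicative.ofAdd 1)
  ν_add a b := by rw [ofAdd_add, map_mul]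
  ν_inj := SemidirectProduct.inl_injective.comp Multiplicative.ofAdd.injective
  p_mul a b := by simp
  p_eq_zero g := by
    constructor
    · intro h
      refine ⟨Multiplicative.toAdd g.left, ?_⟩
      ext
      · simp
      · simpa using h.symm
    · rintro ⟨z, rfl⟩
      simp
  p_t := by simp

end SQC

/-- Every strongly quasiconvex subgroup of `G = ℤ^k ⋊[Φ] ℤ` (with respect to the word
metric of some finite generating set) is trivial or of finite index. -/
theorem stronglyQuasiconvex_trivial_or_finiteIndex (k : ℕ) (hk : 1 ≤ k)
    (Φ : AddAut (Fin k → ℤ))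
    (H : Subgroup (Multiplicative (Fin k → ℤ) ⋊[zdAction Φ] Multiplicative ℤ))
    (hsqc : ∃ S : Set (Multiplicative (Fin k → ℤ) ⋊[zdAction Φ] Multiplicative ℤ),
      S.Finite ∧ Subgroup.closure S = ⊤ ∧
        StronglyQuasiconvexIn (fun x y => (wordDist S x y : ℝ)) (H : Set _)) :
    H = ⊥ ∨ H.FiniteIndex := by
  obtain ⟨S, hSfin, hS, hsqc⟩ := hsqc
  exact SQC.trivial_or_finiteIndex (SQC.extOf Φ) hS hSfin hsqc
end

section
/- Let Φ be the automorphism of ℤ² given by an integer matrix [[a,b],[c,d]] with ad − bc = 1 and |a + d| > 2, and let G = ℤ² ⋊_Φ ℤ. Then G contains a subgroup H that is nontrivial, of infinite index in G, has finite height in G, and is not strongly quasiconvex with respect to any finite generating set of G. -/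
/-! ### The word metric -/

section WordMetric

variable {G : Type*} [Group G] {S : Set G}

lemma wordDist_le_length {x y : G} (l : List G) (hl : ∀ s ∈ l, s ∈ S ∨ s⁻¹ ∈ S)
    (h : x⁻¹ * y = l.prod) : wordDist S x y ≤ l.length :=
  Nat.sInf_le ⟨l.get, fun i => hl _ (List.get_mem l i), by rw [List.ofFn_get, h]⟩

lemma exists_list_wordDist (hS : Subgroup.closure S = ⊤) (x y : G) :
    ∃ l : List G, (∀ s ∈ l, s ∈ S ∨ s⁻¹ ∈ S) ∧ l.length = wordDist S x y ∧
      x⁻¹ * y = l.prod := by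
  have hne : {n : ℕ | ∃ f : Fin n → G, (∀ i, f i ∈ S ∨ (f i)⁻¹ ∈ S) ∧
      x⁻¹ * y = (List.ofFn f).prod}.Nonempty := by
    have hmem : x⁻¹ * y ∈ Subgroup.closure S := by rw [hS]; trivial
    rw [← Subgroup.mem_toSubmonoid, Subgroup.closure_toSubmonoid] at hmem
    obtain ⟨l, hl, hp⟩ := Submonoid.exists_list_of_mem_closure hmem
    exact ⟨l.length, l.get, fun i => hl _ (List.get_mem l i), by rw [List.ofFn_get, hp]⟩
  obtain ⟨f, hf, hp⟩ := Nat.sInf_mem hne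
  refine ⟨List.ofFn f, ?_, ?_, hp⟩
  · intro s hs
    obtain ⟨i, rfl⟩ := (List.mem_ofFn' f s).1 hs
    exact hf i
  · rw [List.length_ofFn]; rfl

lemma wordDist_self (x : G) : wordDist S x x = 0 :=
  Nat.le_zero.1 (wordDist_le_length (S := S) (x := x) (y := x) [] (by simp) (by simp))

lemma wordDist_triangle (hS : Subgroup.closure S = ⊤) (x y z : G) :
    wordDist S x z ≤ wordDist S x y + wordDist S y z := by
  obtain ⟨l, hl, hn, hp⟩ := exists_list_wordDist hS x y
  obtain ⟨l', hl', hn', hp'⟩ := exists_list_wordDist hS y z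
  rw [← hn, ← hn', ← List.length_append]
  refine wordDist_le_length _ ?_ ?_
  · intro s hs
    rcases List.mem_append.1 hs with h | h
    exacts [hl s h, hl' s h]
  · rw [List.prod_append, ← hp, ← hp']; group

lemma wordDist_comm (hS : Subgroup.closure S = ⊤) (x y : G) :
    wordDist S x y = wordDist S y x := by
  have key : ∀ x y : G, wordDist S x y ≤ wordDist S y x := by
    intro x y
    obtain ⟨l, hl, hn, hp⟩ := exists_list_wordDist hS y x
    have hlen : (l.map (·⁻¹)).reverse.length = wordDist S y x := by simp [hn]
    rw [← hlen]
    refine wordDist_le_length _ ?_ ?_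
    · intro s hs
      simp only [List.mem_reverse, List.mem_map] at hs
      obtain ⟨r, hr, rfl⟩ := hs
      rw [inv_inv]
      exact (hl r hr).symm
    · rw [← List.prod_inv_reverse, ← hp]; group
  exact le_antisymm (key x y) (key y x)

lemma wordDist_mul_right_eq (x g : G) : wordDist S x (x * g) = wordDist S 1 g := by
  simp [wordDist]

/-- A quantity `F` that is affine along left multiplication, `F (s * y) = F s + M s * F y`, grows at
most exponentially in the word length. -/
lemma exists_exp_bound (hfin : S.Finite) (F M : G → ℝ) (h1 : F 1 = 0)
    (hmul : ∀ x y, F (x * y) = F x + M x * F y) {mu : ℝ} (hmu : 1 < mu) :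
    ∃ K : ℕ, ∀ l : List G, (∀ s ∈ l, s ∈ S ∨ s⁻¹ ∈ S) → |F l.prod| + 1 ≤ mu ^ (K * l.length) := by
  have hfin' : (S ∪ S⁻¹).Finite := hfin.union hfin.inv
  obtain ⟨B, hB⟩ := (hfin'.image (fun s => 1 + |F s| + |M s|)).bddAbove
  obtain ⟨K, hK⟩ := pow_unbounded_of_one_lt B hmu
  refine ⟨K, fun l => ?_⟩
  induction l with
  | nil => intro _; simp [h1]
  | cons s l ih =>
    intro hl
    have ih' := ih fun r hr => hl r (List.mem_cons_of_mem _ hr)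
    have hs : 1 + |F s| + |M s| ≤ B := hB ⟨s, hl s List.mem_cons_self, rfl⟩
    rw [List.prod_cons, hmul, List.length_cons, Nat.mul_succ, pow_add]
    have e1 : |F s + M s * F l.prod| ≤ |F s| + |M s| * |F l.prod| := by
      rw [← abs_mul]; exact abs_add_le _ _
    have e2 : (|F l.prod| + 1) * (1 + |F s| + |M s|) ≤ mu ^ (K * l.length) * mu ^ K := by
      gcongr
      linarith
    have := abs_nonneg (F s)
    have := abs_nonneg (M s)
    have := abs_nonneg (F l.prod)
    nlinarith [mul_nonneg (abs_nonneg (F s)) (abs_nonneg (F l.prod))]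

lemma exists_linear_bound (hfin : S.Finite) (h : G →* Multiplicative ℤ) :
    ∃ K : ℕ, ∀ l : List G, (∀ s ∈ l, s ∈ S ∨ s⁻¹ ∈ S) →
      |Multiplicative.toAdd (h l.prod)| ≤ K * l.length := by
  have hfin' : (S ∪ S⁻¹).Finite := hfin.union hfin.inv
  obtain ⟨B, hB⟩ := (hfin'.image (fun s => |Multiplicative.toAdd (h s)|)).bddAbove
  refine ⟨B.toNat, fun l => ?_⟩
  induction l with
  | nil => intro _; simp
  | cons s l ih =>
    intro hl
    have ih' := ih fun r hr => hl r (List.mem_cons_of_mem _ hr)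
    have hs : |Multiplicative.toAdd (h s)| ≤ B := hB ⟨s, hl s List.mem_cons_self, rfl⟩
    have hB' := Int.self_le_toNat B
    rw [List.prod_cons, map_mul, toAdd_mul, List.length_cons]
    push_cast
    have := abs_add_le (Multiplicative.toAdd (h s)) (Multiplicative.toAdd (h l.prod))
    linarith

end WordMetric

/-! ### Eigenforms of the matrix -/

/-- The linear form on `ℤ²` given by the left eigenvector `(c, lam - a)` of `[[a, b], [c, d]]`. -/
def eigenForm (a c : ℤ) (lam : ℝ) (z : Fin 2 → ℤ) : ℝ := c * z 0 + (lam - a) * z 1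

lemma eigenForm_add (a c : ℤ) (lam : ℝ) (y z : Fin 2 → ℤ) :
    eigenForm a c lam (y + z) = eigenForm a c lam y + eigenForm a c lam z := by
  simp [eigenForm]; ring

lemma eigenForm_sub (a c : ℤ) (lam : ℝ) (y z : Fin 2 → ℤ) :
    eigenForm a c lam (y - z) = eigenForm a c lam y - eigenForm a c lam z := by
  simp [eigenForm]; ring

lemma abs_eigenForm_sub_comm (a c : ℤ) (lam : ℝ) (y z : Fin 2 → ℤ) :
    |eigenForm a c lam (y - z)| = |eigenForm a c lam (z - y)| := by
  rw [eigenForm_sub, eigenForm_sub, abs_sub_comm]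

lemma exists_eigenvalue (T : ℤ) (hT : 2 < |T|) :
    ∃ lam : ℝ, lam ^ 2 - T * lam + 1 = 0 ∧ 2 ≤ |lam| := by
  have hT9 : (9 : ℝ) ≤ (T : ℝ) ^ 2 := by
    have h3 : (3 : ℤ) ≤ |T| := hT
    have : (9 : ℤ) ≤ T ^ 2 := by rw [← sq_abs]; nlinarith
    exact_mod_cast this
  have hsq := Real.sq_sqrt (show (0 : ℝ) ≤ (T : ℝ) ^ 2 - 4 by linarith)
  have hr : 1 ≤ √((T : ℝ) ^ 2 - 4) := Real.one_le_sqrt.2 (by linarith)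
  set r := √((T : ℝ) ^ 2 - 4)
  rcases lt_abs.1 hT with h | h
  · have h3 : (3 : ℝ) ≤ T := by exact_mod_cast h
    refine ⟨(T + r) / 2, by nlinarith, le_abs.2 (Or.inl (by linarith))⟩
  · have h3 : (3 : ℝ) ≤ -T := by exact_mod_cast h
    refine ⟨(T - r) / 2, by nlinarith, le_abs.2 (Or.inr (by linarith))⟩

section Eigen

variable {a b c d : ℤ} {Φ : AddAut (Fin 2 → ℤ)} {lam : ℝ}

lemma eigenForm_apply (h1 : a * d - b * c = 1)
    (hΦ : ∀ v : Fin 2 → ℤ, Φ v = Matrix.mulVec !![a, b; c, d] v)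
    (hlam : lam ^ 2 - ((a + d : ℤ) : ℝ) * lam + 1 = 0) (z : Fin 2 → ℤ) :
    eigenForm a c lam (Φ z) = lam * eigenForm a c lam z := by
  have h1' : (a : ℝ) * d - b * c = 1 := by exact_mod_cast h1
  push_cast at hlam
  simp only [eigenForm, hΦ, Matrix.mulVec, dotProduct, Fin.sum_univ_two, Matrix.of_apply,
    Matrix.cons_val_zero, Matrix.cons_val_one, Matrix.cons_val', Matrix.cons_val_fin_one]
  push_cast
  linear_combination (-(z 1 : ℝ)) * h1' - (z 1 : ℝ) * hlam

lemma zdAction_succ (m : ℤ) (z : Fin 2 → ℤ) :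
    (zdAction Φ (Multiplicative.ofAdd (m + 1)) (Multiplicative.ofAdd z)).toAdd =
      Φ (zdAction Φ (Multiplicative.ofAdd m) (Multiplicative.ofAdd z)).toAdd := by
  rw [add_comm, ofAdd_add, map_mul, MulAut.mul_apply]
  have : zdAction Φ (Multiplicative.ofAdd 1) = AddEquiv.toMultiplicative Φ := by
    simp [zdAction]
  rw [this]
  rfl

lemma eigenForm_zdAction (hΦ : ∀ z, eigenForm a c lam (Φ z) = lam * eigenForm a c lam z)
    (h0 : lam ≠ 0) (m : ℤ) (z : Fin 2 → ℤ) :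
    eigenForm a c lam (zdAction Φ (Multiplicative.ofAdd m) (Multiplicative.ofAdd z)).toAdd =
      lam ^ m * eigenForm a c lam z := by
  induction m using Int.induction_on with
  | zero => simp
  | succ n ih => rw [zdAction_succ, hΦ, ih, zpow_add_one₀ h0]; ring
  | pred n ih =>
    have h := zdAction_succ (Φ := Φ) (-(n : ℤ) - 1) z
    rw [sub_add_cancel] at h
    rw [h, hΦ] at ih
    rw [zpow_sub_one₀ h0]
    field_simp
    linarith

lemma eq_zero_of_eigenForm (hc : c ≠ 0) (hlam : 2 ≤ |lam|) (z : Fin 2 → ℤ)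
    (hf : eigenForm a c lam z = 0) (hg : eigenForm a c lam⁻¹ z = 0) : z = 0 := by
  have hne : lam - lam⁻¹ ≠ 0 := by
    intro h
    have h2 : |lam| = |lam|⁻¹ := by rw [← abs_inv, ← sub_eq_zero.1 h]
    have h3 : |lam|⁻¹ ≤ 2⁻¹ := inv_anti₀ (by norm_num) hlam
    linarith
  unfold eigenForm at hf hg
  have hz1 : (z 1 : ℝ) = 0 := by
    have : (lam - lam⁻¹) * (z 1 : ℝ) = 0 := by linear_combination hf - hg
    exact (mul_eq_zero.1 this).resolve_left hne
  have hz0 : (z 0 : ℝ) = 0 := by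
    rw [hz1] at hf
    have : (c : ℝ) * z 0 = 0 := by linear_combination hf
    exact (mul_eq_zero.1 this).resolve_left (by exact_mod_cast hc)
  ext i
  fin_cases i
  · exact_mod_cast hz0
  · exact_mod_cast hz1

/-! ### The subgroup generated by `t` -/

lemma zpow_ne_one_of_two_le_abs (hlam : 2 ≤ |lam|) {m : ℤ} (hm : m ≠ 0) : lam ^ m ≠ 1 := by
  intro h
  have h' : |lam| ^ m = 1 := by rw [← abs_zpow, h, abs_one]
  exact hm ((zpow_eq_one_iff_right₀ (abs_nonneg _) (by linarith)).1 h')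

lemma heightLE_range_inr (hc : c ≠ 0) (hlam : 2 ≤ |lam|)
    (hf : ∀ z, eigenForm a c lam (Φ z) = lam * eigenForm a c lam z)
    (hg : ∀ z, eigenForm a c lam⁻¹ (Φ z) = lam⁻¹ * eigenForm a c lam⁻¹ z) :
    HeightLE (SemidirectProduct.inr (φ := zdAction Φ)).range 1 := by
  have hl0 : lam ≠ 0 := by rintro rfl; simp at hlam; linarith
  intro g hgd
  refine (Set.finite_singleton 1).subset fun x hx => ?_
  have hx' : ∀ i, x ∈ conjSubgroup (g i) (SemidirectProduct.inr (φ := zdAction Φ)).range :=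
    Subgroup.mem_iInf.1 hx
  obtain ⟨_, ⟨m, rfl⟩, hm⟩ := hx' 0
  obtain ⟨_, ⟨m', rfl⟩, hm'⟩ := hx' 1
  simp only [MulEquiv.toMonoidHom_eq_coe, MonoidHom.coe_coe, MulAut.conj_apply] at hm hm'
  have hmm : m = m' := by
    have h := congrArg SemidirectProduct.right (hm.trans hm'.symm)
    simpa using h
  subst hmm
  set k := (g 0)⁻¹ * g 1 with hk
  have hcomm : SemidirectProduct.inr m * k = k * SemidirectProduct.inr m := by
    have h := hm.trans hm'.symm
    have h2 : (g 0)⁻¹ * (g 0 * SemidirectProduct.inr m * (g 0)⁻¹) * g 1 =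
      (g 0)⁻¹ * (g 1 * SemidirectProduct.inr m * (g 1)⁻¹) * g 1 := by rw [h]
    simpa [hk, mul_assoc] using h2
  have hfix : zdAction Φ m k.left = k.left := by
    have h := congrArg SemidirectProduct.left hcomm
    simpa using h
  have hm1 : m = 1 := by
    by_contra hne
    have hne' : m.toAdd ≠ 0 := fun h => hne (by simpa using h)
    have vanish : ∀ e : ℝ, e ≠ 0 → e ^ m.toAdd ≠ 1 →
        (∀ z, eigenForm a c e (Φ z) = e * eigenForm a c e z) →
        eigenForm a c e k.left.toAdd = 0 := by
      intro e he he1 h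
      have h2 := eigenForm_zdAction h he m.toAdd k.left.toAdd
      simp only [ofAdd_toAdd, hfix] at h2
      have h3 : (e ^ m.toAdd - 1) * eigenForm a c e k.left.toAdd = 0 := by
        rw [sub_mul, ← h2]; ring
      exact (mul_eq_zero.1 h3).resolve_left (sub_ne_zero.2 he1)
    have hz : k.left.toAdd = 0 := by
      refine eq_zero_of_eigenForm hc hlam _
        (vanish lam hl0 (zpow_ne_one_of_two_le_abs hlam hne') hf)
        (vanish lam⁻¹ (inv_ne_zero hl0) ?_ hg)
      rw [inv_zpow']
      exact zpow_ne_one_of_two_le_abs hlam (neg_ne_zero.2 hne')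
    refine hgd 0 1 (by decide) ⟨k.right, ?_⟩
    rw [← hk]
    ext1
    · exact hz.symm
    · rfl
  rw [hm1] at hm
  simpa using hm.symm

lemma index_range_inr : (SemidirectProduct.inr (φ := zdAction Φ)).range.index = 0 := by
  have hinj : Function.Injective (fun z : Multiplicative (Fin 2 → ℤ) =>
      (QuotientGroup.mk (SemidirectProduct.inl z) : (Multiplicative (Fin 2 → ℤ) ⋊[zdAction Φ]
        Multiplicative ℤ) ⧸ (SemidirectProduct.inr (φ := zdAction Φ)).range)) := by
    intro y z h
    obtain ⟨m, hm⟩ := QuotientGroup.eq.1 h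
    have h2 := congrArg SemidirectProduct.left hm
    rw [← map_inv, ← map_mul] at h2
    simp only [SemidirectProduct.left_inr, SemidirectProduct.left_inl] at h2
    exact inv_mul_eq_one.1 h2.symm
  have : Infinite (Multiplicative (Fin 2 → ℤ)) := inferInstanceAs (Infinite (Fin 2 → ℤ))
  have := Infinite.of_injective _ hinj
  exact Nat.card_eq_zero_of_infinite

/-! ### Lower bounds for the word metric -/

lemma eigenForm_mul (hf : ∀ z, eigenForm a c lam (Φ z) = lam * eigenForm a c lam z)
    (h0 : lam ≠ 0) (x y : Multiplicative (Fin 2 → ℤ) ⋊[zdAction Φ] Multiplicative ℤ) :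
    eigenForm a c lam (x * y).left.toAdd =
      eigenForm a c lam x.left.toAdd + lam ^ x.right.toAdd * eigenForm a c lam y.left.toAdd := by
  rw [SemidirectProduct.mul_left, toAdd_mul, eigenForm_add, ← eigenForm_zdAction hf h0]
  simp

/-- The element `(z, h)` of `ℤ² ⋊ ℤ`, in additive coordinates. -/
def pt (Φ : AddAut (Fin 2 → ℤ)) (z : Fin 2 → ℤ) (h : ℤ) :
    Multiplicative (Fin 2 → ℤ) ⋊[zdAction Φ] Multiplicative ℤ :=
  ⟨Multiplicative.ofAdd z, Multiplicative.ofAdd h⟩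

/-- The vector `Φ ^ m z`. -/
def act (Φ : AddAut (Fin 2 → ℤ)) (m : ℤ) (z : Fin 2 → ℤ) : Fin 2 → ℤ :=
  (zdAction Φ (Multiplicative.ofAdd m) (Multiplicative.ofAdd z)).toAdd

lemma eigenForm_bound {S : Set (Multiplicative (Fin 2 → ℤ) ⋊[zdAction Φ] Multiplicative ℤ)}
    (hfin : S.Finite) (hS : Subgroup.closure S = ⊤) {mu : ℝ} (hmu : 1 < mu)
    (hf : ∀ z, eigenForm a c lam (Φ z) = lam * eigenForm a c lam z) (h0 : lam ≠ 0) :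
    ∃ K : ℕ, ∀ z h z' h', |lam| ^ (-h) * |eigenForm a c lam (z' - z)| ≤
      mu ^ (K * wordDist S (pt Φ z h) (pt Φ z' h')) := by
  obtain ⟨K, hK⟩ := exists_exp_bound hfin
    (fun x => eigenForm a c lam x.left.toAdd) (fun x => lam ^ x.right.toAdd)
    (by simp [eigenForm]) (eigenForm_mul hf h0) hmu
  refine ⟨K, fun z h z' h' => ?_⟩
  obtain ⟨l, hl, hn, hp⟩ := exists_list_wordDist hS (pt Φ z h) (pt Φ z' h')
  have h1 := hK l hl
  rw [← hn]
  have h2 := eigenForm_mul hf h0 (pt Φ z h) ((pt Φ z h)⁻¹ * pt Φ z' h')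
  rw [mul_inv_cancel_left, hp] at h2
  have h3 : eigenForm a c lam z' = eigenForm a c lam z +
      lam ^ h * eigenForm a c lam l.prod.left.toAdd := h2
  have h4 : lam ^ (-h) * eigenForm a c lam (z' - z) = eigenForm a c lam l.prod.left.toAdd := by
    rw [eigenForm_sub, h3, zpow_neg]
    have := zpow_ne_zero h h0
    field_simp
    ring
  rw [← abs_zpow, ← abs_mul, h4]
  linarith

/-- The word metric dominates, up to a multiplicative constant `K`, the height difference and
the logarithms to base `|lam|` of the two eigenforms at the `ℤ²`-part of `x⁻¹ * y`. -/
lemma exists_growth_bound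
    {S : Set (Multiplicative (Fin 2 → ℤ) ⋊[zdAction Φ] Multiplicative ℤ)}
    (hfin : S.Finite) (hS : Subgroup.closure S = ⊤) (hlam : 2 ≤ |lam|)
    (hf : ∀ z, eigenForm a c lam (Φ z) = lam * eigenForm a c lam z)
    (hg : ∀ z, eigenForm a c lam⁻¹ (Φ z) = lam⁻¹ * eigenForm a c lam⁻¹ z) :
    ∃ K : ℕ, 1 ≤ K ∧ ∀ z h z' h',
      (|h' - h| ≤ (K * wordDist S (pt Φ z h) (pt Φ z' h') : ℕ)) ∧
      (∀ m : ℤ, |lam| ^ (m + h) ≤ |eigenForm a c lam (z' - z)| →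
        m ≤ (K * wordDist S (pt Φ z h) (pt Φ z' h') : ℕ)) ∧
      (∀ m : ℤ, |lam| ^ (m - h) ≤ |eigenForm a c lam⁻¹ (z' - z)| →
        m ≤ (K * wordDist S (pt Φ z h) (pt Φ z' h') : ℕ)) := by
  have hpos : 0 < |lam| := by linarith
  have hone : 1 < |lam| := by linarith
  have hl0 : lam ≠ 0 := abs_pos.1 hpos
  obtain ⟨K₁, h₁⟩ := eigenForm_bound hfin hS hone hf hl0
  obtain ⟨K₂, h₂⟩ := eigenForm_bound hfin hS hone hg (inv_ne_zero hl0)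
  obtain ⟨K₃, h₃⟩ := exists_linear_bound hfin
    (SemidirectProduct.rightHom (φ := zdAction Φ))
  refine ⟨K₁ + K₂ + K₃ + 1, by omega, fun z h z' h' => ?_⟩
  replace h₁ := h₁ z h z' h'
  replace h₂ := h₂ z h z' h'
  have h₃' : |h' - h| ≤ K₃ * (wordDist S (pt Φ z h) (pt Φ z' h') : ℕ) := by
    obtain ⟨l, hl, hn, hp⟩ := exists_list_wordDist hS (pt Φ z h) (pt Φ z' h')
    have h4 := h₃ l hl
    rw [← hp, hn] at h4
    have h5 : (SemidirectProduct.rightHom ((pt Φ z h)⁻¹ * pt Φ z' h')).toAdd = h' - h := by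
      simp [pt]; ring
    rwa [h5] at h4
  set n := wordDist S (pt Φ z h) (pt Φ z' h')
  have le_of_pow : ∀ (m : ℤ) (j : ℕ), |lam| ^ m ≤ |lam| ^ j → m ≤ j := by
    intro m j hm
    rw [← zpow_natCast] at hm
    exact (zpow_le_zpow_iff_right₀ hone).1 hm
  refine ⟨?_, fun m hm => ?_, fun m hm => ?_⟩
  · refine h₃'.trans ?_
    have : K₃ * n ≤ (K₁ + K₂ + K₃ + 1) * n := Nat.mul_le_mul_right _ (by omega)
    exact_mod_cast this
  · have hk : K₁ * n ≤ (K₁ + K₂ + K₃ + 1) * n := Nat.mul_le_mul_right _ (by omega)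
    have : m ≤ (K₁ * n : ℕ) := by
      refine le_of_pow _ _ (le_trans ?_ h₁)
      rw [show m = -h + (m + h) by ring, zpow_add₀ hpos.ne']
      gcongr
    omega
  · have hk : K₂ * n ≤ (K₁ + K₂ + K₃ + 1) * n := Nat.mul_le_mul_right _ (by omega)
    have : m ≤ (K₂ * n : ℕ) := by
      refine le_of_pow _ _ (le_trans ?_ h₂)
      rw [abs_inv, inv_zpow', neg_neg]
      rw [show m = h + (m - h) by ring, zpow_add₀ hpos.ne']
      gcongr
    omega

/-! ### The detour path -/

/-- The vector `(1, 0)`. -/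
def baseVec : Fin 2 → ℤ := ![1, 0]

/-- The path `(v, N) → (v, -N)`, `(v + u, -N) → (v + u, N)`, `(u, N) → (u, -N)` at unit vertical
speed, where `v = Φ ^ N (1, 0)` and `u = Φ ^ (-N) (1, 0)`. It is used for times `0 ≤ k ≤ 6 * N`. -/
def loopPath (Φ : AddAut (Fin 2 → ℤ)) (N k : ℕ) :
    Multiplicative (Fin 2 → ℤ) ⋊[zdAction Φ] Multiplicative ℤ :=
  if k ≤ 2 * N then pt Φ (act Φ N baseVec) (N - k)
  else if k ≤ 4 * N then pt Φ (act Φ N baseVec + act Φ (-N) baseVec) (k - 3 * N)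
  else pt Φ (act Φ (-N) baseVec) (5 * N - k)

lemma eigenForm_act (hf : ∀ z, eigenForm a c lam (Φ z) = lam * eigenForm a c lam z)
    (h0 : lam ≠ 0) (m : ℤ) : eigenForm a c lam (act Φ m baseVec) = lam ^ m * c := by
  rw [act, eigenForm_zdAction hf h0]
  simp [eigenForm, baseVec]

/-- Since `|lam| ≥ 2` and `|c| ≥ 1`, a signed sum of two different powers of `lam`, times `c`, loses at
most a factor `|lam|` against the larger one. -/
lemma zpow_le_abs_add (hc : c ≠ 0) (hlam : 2 ≤ |lam|) {m j : ℤ} (h : j < m) {e : ℝ}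
    (he : |e| = 1) :
    |lam| ^ (m - 1) ≤ |lam ^ m * c + e * (lam ^ j * c)| := by
  have hpos : 0 < |lam| := by linarith
  have hc1 : (1 : ℝ) ≤ |(c : ℝ)| := by exact_mod_cast Int.one_le_abs hc
  have e1 : |lam ^ m * c + e * (lam ^ j * c)| = |lam ^ m + e * lam ^ j| * |(c : ℝ)| := by
    rw [← abs_mul]; ring_nf
  have e2 : |lam| ^ m - |lam| ^ j ≤ |lam ^ m + e * lam ^ j| := by
    have := abs_sub_abs_le_abs_sub (lam ^ m) (-(e * lam ^ j))
    rw [abs_neg, abs_mul, he, one_mul, sub_neg_eq_add, abs_zpow, abs_zpow] at this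
    exact this
  have e3 : |lam| ^ j ≤ |lam| ^ (m - 1) := zpow_le_zpow_right₀ (by linarith) (by omega)
  have e4 : |lam| ^ m = |lam| ^ (m - 1) * |lam| := by
    rw [← zpow_add_one₀ hpos.ne']; ring_nf
  have e5 : 0 < |lam| ^ (m - 1) := zpow_pos hpos _
  rw [e1]
  nlinarith [abs_nonneg (lam ^ m + e * lam ^ j)]

lemma zpow_le_abs_mul (hc : c ≠ 0) (m : ℤ) : |lam| ^ m ≤ |lam ^ m * c| := by
  have hc1 : (1 : ℝ) ≤ |(c : ℝ)| := by exact_mod_cast Int.one_le_abs hc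
  rw [abs_mul, abs_zpow]
  exact le_mul_of_one_le_right (zpow_nonneg (abs_nonneg _) _) hc1

/-- Points on a common vertical segment are separated by height. On consecutive segments the
eigenform of the horizontal step between them and the height difference together bound the time.
On the first and the third segment the points differ by `u - v`, and one of the two eigenforms has
exponent at least `N - 1`. -/
lemma loopPath_lower {S : Set (Multiplicative (Fin 2 → ℤ) ⋊[zdAction Φ] Multiplicative ℤ)}
    (hc : c ≠ 0) (hlam : 2 ≤ |lam|)
    (hf : ∀ z, eigenForm a c lam (Φ z) = lam * eigenForm a c lam z)
    (hg : ∀ z, eigenForm a c lam⁻¹ (Φ z) = lam⁻¹ * eigenForm a c lam⁻¹ z) {K : ℕ}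
    (hK : ∀ z h z' h',
      (|h' - h| ≤ (K * wordDist S (pt Φ z h) (pt Φ z' h') : ℕ)) ∧
      (∀ m : ℤ, |lam| ^ (m + h) ≤ |eigenForm a c lam (z' - z)| →
        m ≤ (K * wordDist S (pt Φ z h) (pt Φ z' h') : ℕ)) ∧
      (∀ m : ℤ, |lam| ^ (m - h) ≤ |eigenForm a c lam⁻¹ (z' - z)| →
        m ≤ (K * wordDist S (pt Φ z h) (pt Φ z' h') : ℕ)))
    {N : ℕ} (hN : 1 ≤ N) {i j : ℕ} (hij : i ≤ j) (hj : j ≤ 6 * N) :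
    j ≤ i + 6 * (K * wordDist S (loopPath Φ N i) (loopPath Φ N j)) + 6 := by
  have hl0 : lam ≠ 0 := abs_pos.1 (by linarith)
  have fact := eigenForm_act hf hl0
  have gact : ∀ m : ℤ, eigenForm a c lam⁻¹ (act Φ m baseVec) = lam ^ (-m) * c := by
    intro m; rw [eigenForm_act hg (inv_ne_zero hl0), inv_zpow']
  unfold loopPath
  split_ifs with hi1 hj1 hj2 hi2 hj1 hj2 hj1 hj2
  · have := (hK (act Φ N baseVec) (N - i) (act Φ N baseVec) (N - j)).1
    rw [abs_le] at this
    omega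
  · obtain ⟨k1, -, k3⟩ := hK (act Φ N baseVec) (N - i)
      (act Φ N baseVec + act Φ (-N) baseVec) (j - 3 * N)
    have := k3 (2 * N - i) (by
      rw [add_sub_cancel_left, gact, neg_neg, show (2 * N - i - (N - i) : ℤ) = N by ring]
      exact zpow_le_abs_mul hc _)
    rw [abs_le] at k1
    omega
  · obtain ⟨-, k2, k3⟩ := hK (act Φ N baseVec) (N - i) (act Φ (-N) baseVec) (5 * N - j)
    have e2 := k2 (i - 1) (by
      rw [abs_eigenForm_sub_comm, eigenForm_sub, fact, fact,
        show (i - 1 + (N - i) : ℤ) = N - 1 by ring]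
      have := zpow_le_abs_add hc hlam (m := N) (j := -N) (by omega) (e := -1) (by simp)
      rwa [neg_one_mul, ← sub_eq_add_neg] at this)
    have e3 := k3 (2 * N - i - 1) (by
      rw [eigenForm_sub, gact, gact, neg_neg,
        show (2 * N - i - 1 - (N - i) : ℤ) = N - 1 by ring]
      have := zpow_le_abs_add hc hlam (m := N) (j := -N) (by omega) (e := -1) (by simp)
      rwa [neg_one_mul, ← sub_eq_add_neg] at this)
    omega
  · omega
  · have := (hK (act Φ N baseVec + act Φ (-N) baseVec) (i - 3 * N)
      (act Φ N baseVec + act Φ (-N) baseVec) (j - 3 * N)).1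
    rw [abs_le] at this
    omega
  · obtain ⟨k1, k2, -⟩ := hK (act Φ N baseVec + act Φ (-N) baseVec) (i - 3 * N)
      (act Φ (-N) baseVec) (5 * N - j)
    have := k2 (4 * N - i) (by
      rw [abs_eigenForm_sub_comm, add_sub_cancel_right, fact,
        show (4 * N - i + (i - 3 * N) : ℤ) = N by ring]
      exact zpow_le_abs_mul hc _)
    rw [abs_le] at k1
    omega
  · omega
  · omega
  · have := (hK (act Φ (-N) baseVec) (5 * N - i) (act Φ (-N) baseVec) (5 * N - j)).1
    rw [abs_le] at this
    omega

lemma wordDist_vertical {S : Set (Multiplicative (Fin 2 → ℤ) ⋊[zdAction Φ] Multiplicative ℤ)}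
    (hS : Subgroup.closure S = ⊤) (z : Fin 2 → ℤ) {h h' : ℤ} (hh : h' = h + 1 ∨ h = h' + 1) :
    wordDist S (pt Φ z h) (pt Φ z h') ≤ wordDist S 1 (pt Φ 0 1) := by
  have key : ∀ h, wordDist S (pt Φ z h) (pt Φ z (h + 1)) = wordDist S 1 (pt Φ 0 1) := by
    intro h
    rw [← wordDist_mul_right_eq (pt Φ z h)]
    congr 1
    ext1 <;> simp [pt]
  rcases hh with rfl | rfl
  · exact (key _).le
  · rw [wordDist_comm hS]; exact (key _).le

lemma wordDist_horizontal (S : Set (Multiplicative (Fin 2 → ℤ) ⋊[zdAction Φ] Multiplicative ℤ))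
    (z : Fin 2 → ℤ) (h : ℤ) :
    wordDist S (pt Φ z h) (pt Φ (z + act Φ h baseVec) h) = wordDist S 1 (pt Φ baseVec 0) := by
  rw [← wordDist_mul_right_eq (pt Φ z h)]
  congr 1
  ext1 <;> simp [pt, act]

lemma loopPath_step {S : Set (Multiplicative (Fin 2 → ℤ) ⋊[zdAction Φ] Multiplicative ℤ)}
    (hS : Subgroup.closure S = ⊤) {N : ℕ} (hN : 1 ≤ N) (k : ℕ) :
    wordDist S (loopPath Φ N k) (loopPath Φ N (k + 1)) ≤
      wordDist S 1 (pt Φ 0 1) + wordDist S 1 (pt Φ baseVec 0) := by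
  unfold loopPath
  split_ifs with hi1 hj1 hj2 hi2 hj1 hj2 hj1 hj2
  · exact (wordDist_vertical hS _ (by omega)).trans (by omega)
  · obtain rfl : k = 2 * N := by omega
    refine (wordDist_triangle hS _ (pt Φ (act Φ N baseVec + act Φ (-N) baseVec) (-N)) _).trans ?_
    rw [show (N - (2 * N : ℕ) : ℤ) = -N by push_cast; ring, wordDist_horizontal, add_comm]
    gcongr
    exact wordDist_vertical hS _ (by omega)
  · omega
  · omega
  · exact (wordDist_vertical hS _ (by omega)).trans (by omega)
  · obtain rfl : k = 4 * N := by omega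
    refine (wordDist_triangle hS _ (pt Φ (act Φ (-N) baseVec) N) _).trans ?_
    rw [show ((4 * N : ℕ) - 3 * N : ℤ) = N by push_cast; ring, wordDist_comm hS,
      add_comm (act Φ N baseVec), wordDist_horizontal, add_comm]
    gcongr
    exact wordDist_vertical hS _ (by omega)
  · omega
  · omega
  · exact (wordDist_vertical hS _ (by omega)).trans (by omega)

lemma wordDist_path_le {G : Type*} [Group G] {S : Set G} (hS : Subgroup.closure S = ⊤)
    (q : ℕ → G) {D : ℕ} (hq : ∀ k, wordDist S (q k) (q (k + 1)) ≤ D) (i n : ℕ) :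
    wordDist S (q i) (q (i + n)) ≤ D * n := by
  induction n with
  | zero => simp [wordDist_self]
  | succ n ih =>
    have h1 := wordDist_triangle hS (q i) (q (i + n)) (q (i + (n + 1)))
    have h2 := hq (i + n)
    rw [add_assoc] at h2
    rw [Nat.mul_succ]
    omega

/-- A path that stays within `D` of a discrete path `q` sampled at integer parts is a
quasi-geodesic as soon as `q` satisfies coarse linear upper and lower distance bounds. -/
lemma isQuasiGeodesicOn_of_discrete {G : Type*} [Group G] {S : Set G}
    (hS : Subgroup.closure S = ⊤) (q : ℕ → G) (γ : ℝ → G) {D K M : ℕ} (hK : 1 ≤ K)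
    (hq : ∀ k, wordDist S (q k) (q (k + 1)) ≤ D)
    (hlow : ∀ i j, i ≤ j → j ≤ M → j ≤ i + 6 * (K * wordDist S (q i) (q j)) + 6)
    (hγ : ∀ s ∈ Set.Icc (0 : ℝ) M, wordDist S (γ s) (q ⌊s⌋₊) ≤ D) :
    IsQuasiGeodesicOn (fun x y => (wordDist S x y : ℝ)) (6 * K + D) (3 * D + 7) 0 M γ := by
  have hKr : (1 : ℝ) ≤ K := by exact_mod_cast hK
  have hDr : (0 : ℝ) ≤ D := Nat.cast_nonneg _
  have key : ∀ s ∈ Set.Icc (0 : ℝ) M, ∀ t ∈ Set.Icc (0 : ℝ) M, s ≤ t →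
      (1 / (6 * K + D : ℝ)) * (t - s) - (3 * D + 7) ≤ wordDist S (γ s) (γ t) ∧
      (wordDist S (γ s) (γ t) : ℝ) ≤ (6 * K + D) * (t - s) + (3 * D + 7) := by
    intro s hs t ht hst
    have hfl : ⌊s⌋₊ ≤ ⌊t⌋₊ := Nat.floor_le_floor hst
    have htM : ⌊t⌋₊ ≤ M := Nat.floor_le_of_le ht.2
    have s1 := Nat.floor_le hs.1
    have s2 := Nat.lt_floor_add_one s
    have t1 := Nat.floor_le ht.1
    have t2 := Nat.lt_floor_add_one t
    have ds := hγ s hs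
    have dt := hγ t ht
    have lo := hlow _ _ hfl htM
    have up := wordDist_path_le hS q hq ⌊s⌋₊ (⌊t⌋₊ - ⌊s⌋₊)
    rw [Nat.add_sub_cancel' hfl] at up
    have tri1 := wordDist_triangle hS (γ s) (q ⌊s⌋₊) (γ t)
    have tri2 := wordDist_triangle hS (q ⌊s⌋₊) (q ⌊t⌋₊) (γ t)
    have tri3 := wordDist_triangle hS (q ⌊s⌋₊) (γ s) (q ⌊t⌋₊)
    have tri4 := wordDist_triangle hS (γ s) (γ t) (q ⌊t⌋₊)
    rw [wordDist_comm hS (q ⌊t⌋₊)] at tri2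
    rw [wordDist_comm hS (q ⌊s⌋₊) (γ s)] at tri3
    have up' : (wordDist S (q ⌊s⌋₊) (q ⌊t⌋₊) : ℝ) ≤ D * ((⌊t⌋₊ : ℝ) - ⌊s⌋₊) := by
      rw [← Nat.cast_sub hfl]; exact_mod_cast up
    have lo' : (⌊t⌋₊ : ℝ) ≤ ⌊s⌋₊ + 6 * (K * wordDist S (q ⌊s⌋₊) (q ⌊t⌋₊)) + 6 := by
      exact_mod_cast lo
    have A : (wordDist S (γ s) (γ t) : ℝ) ≤ wordDist S (q ⌊s⌋₊) (q ⌊t⌋₊) + 2 * D := by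
      have : wordDist S (γ s) (γ t) ≤ wordDist S (q ⌊s⌋₊) (q ⌊t⌋₊) + 2 * D := by omega
      exact_mod_cast this
    have B : (wordDist S (q ⌊s⌋₊) (q ⌊t⌋₊) : ℝ) ≤ wordDist S (γ s) (γ t) + 2 * D := by
      have : wordDist S (q ⌊s⌋₊) (q ⌊t⌋₊) ≤ wordDist S (γ s) (γ t) + 2 * D := by omega
      exact_mod_cast this
    generalize (wordDist S (q ⌊s⌋₊) (q ⌊t⌋₊) : ℝ) = x at *
    have hy0 : (0 : ℝ) ≤ wordDist S (γ s) (γ t) := Nat.cast_nonneg _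
    generalize (wordDist S (γ s) (γ t) : ℝ) = y at *
    constructor
    · rw [sub_le_iff_le_add, one_div, inv_mul_le_iff₀ (by linarith)]
      have e1 : t - s ≤ 6 * (K * x) + 7 := by linarith
      have e2 : (K : ℝ) * x ≤ K * (y + 2 * D) := by gcongr
      nlinarith [mul_nonneg hDr hy0, mul_nonneg hDr hDr, mul_nonneg hDr (sub_nonneg.2 hKr)]
    · have e1 : (D : ℝ) * ((⌊t⌋₊ : ℝ) - ⌊s⌋₊) ≤ D * (t - s + 1) := by gcongr; linarith
      nlinarith [mul_nonneg (by linarith : (0 : ℝ) ≤ K) (sub_nonneg.2 hst)]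
  intro s hs t ht
  rcases le_total s t with h | h
  · rw [abs_sub_comm, abs_of_nonneg (sub_nonneg.2 h)]
    exact key s hs t ht h
  · rw [abs_of_nonneg (sub_nonneg.2 h)]
    simp only [wordDist_comm hS (γ s)]
    exact key t ht s hs h

/-- `loopPath` at integer parts, with the two endpoints replaced by `t ^ N` and `t ^ (-N)`. -/
noncomputable def detour (Φ : AddAut (Fin 2 → ℤ)) (N : ℕ) (s : ℝ) :
    Multiplicative (Fin 2 → ℤ) ⋊[zdAction Φ] Multiplicative ℤ :=
  if s ≤ 0 then pt Φ 0 N else if (6 * N : ℕ) ≤ s then pt Φ 0 (-N) else loopPath Φ N ⌊s⌋₊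

lemma detour_near {S : Set (Multiplicative (Fin 2 → ℤ) ⋊[zdAction Φ] Multiplicative ℤ)}
    {N : ℕ} (hN : 1 ≤ N) {s : ℝ} (hs : s ∈ Set.Icc (0 : ℝ) (6 * N : ℕ)) :
    wordDist S (detour Φ N s) (loopPath Φ N ⌊s⌋₊) ≤ wordDist S 1 (pt Φ baseVec 0) := by
  unfold detour
  split_ifs with h1 h2
  · obtain rfl : s = 0 := le_antisymm h1 hs.1
    have := wordDist_horizontal S 0 N
    simpa [loopPath] using this.le
  · obtain rfl : s = (6 * N : ℕ) := le_antisymm hs.2 h2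
    have := wordDist_horizontal S 0 (-N)
    rw [Nat.floor_natCast, loopPath, if_neg (by omega), if_neg (by omega),
      show (5 * N - (6 * N : ℕ) : ℤ) = -N by push_cast; ring]
    simpa using this.le
  · rw [wordDist_self]; exact Nat.zero_le _

lemma pt_zero_mem (h : ℤ) : pt Φ 0 h ∈ (SemidirectProduct.inr (φ := zdAction Φ)).range :=
  ⟨Multiplicative.ofAdd h, rfl⟩

lemma not_stronglyQuasiconvex_range_inr
    {S : Set (Multiplicative (Fin 2 → ℤ) ⋊[zdAction Φ] Multiplicative ℤ)}
    (hfin : S.Finite) (hS : Subgroup.closure S = ⊤) (hc : c ≠ 0) (hlam : 2 ≤ |lam|)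
    (hf : ∀ z, eigenForm a c lam (Φ z) = lam * eigenForm a c lam z)
    (hg : ∀ z, eigenForm a c lam⁻¹ (Φ z) = lam⁻¹ * eigenForm a c lam⁻¹ z) :
    ¬ StronglyQuasiconvexIn (fun x y => (wordDist S x y : ℝ))
      ((SemidirectProduct.inr (φ := zdAction Φ)).range : Set _) := by
  have hl0 : lam ≠ 0 := abs_pos.1 (by linarith)
  obtain ⟨K, hK1, hK⟩ := exists_growth_bound hfin hS hlam hf hg
  set D := wordDist S 1 (pt Φ 0 1) + wordDist S 1 (pt Φ baseVec 0) with hD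
  intro hsq
  have hKr : (1 : ℝ) ≤ K := by exact_mod_cast hK1
  have hDr : (0 : ℝ) ≤ D := Nat.cast_nonneg _
  obtain ⟨R, hR⟩ := hsq (6 * K + D) (3 * D + 7) (by linarith) (by linarith)
  -- The midpoint is at distance at least `(N - 1) / K` from `H`.
  obtain ⟨N, hNR⟩ := exists_nat_gt (max 1 (K * R + 1))
  have hN : 1 ≤ N := by exact_mod_cast (le_max_left _ _).trans hNR.le
  have hq := isQuasiGeodesicOn_of_discrete hS (loopPath Φ N) (detour Φ N) (D := D)
    (M := 6 * N) hK1 (loopPath_step hS hN)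
    (fun i j hij hj => loopPath_lower hc hlam hf hg hK hN hij hj)
    (fun s hs => (detour_near hN hs).trans (Nat.le_add_left _ _))
  have hNr : (1 : ℝ) ≤ N := by exact_mod_cast hN
  obtain ⟨y, ⟨m, rfl⟩, hy⟩ := hR 0 (6 * N : ℕ) (Nat.cast_nonneg _) (detour Φ N) hq
    (by rw [detour, if_pos le_rfl]; exact pt_zero_mem _)
    (by
      rw [detour, if_neg (by push_cast; linarith), if_pos le_rfl]
      exact pt_zero_mem _)
    ((3 * N : ℕ) : ℝ) ⟨Nat.cast_nonneg _, by push_cast; linarith⟩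
  have hmid : detour Φ N ((3 * N : ℕ) : ℝ) =
      pt Φ (act Φ N baseVec + act Φ (-N) baseVec) 0 := by
    rw [detour, if_neg (by push_cast; linarith), if_neg (by push_cast; linarith),
      Nat.floor_natCast, loopPath, if_neg (by omega), if_pos (by omega)]
    congr 1
    push_cast
    ring
  rw [hmid] at hy
  have hfar := (hK (act Φ N baseVec + act Φ (-N) baseVec) 0 0 m.toAdd).2.1 (N - 1) (by
    rw [abs_eigenForm_sub_comm, sub_zero, eigenForm_add, eigenForm_act hf hl0,
      eigenForm_act hf hl0, add_zero]
    have := zpow_le_abs_add hc hlam (m := N) (j := -N) (by omega) (e := 1) (by simp)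
    rwa [one_mul] at this)
  have hpt : pt Φ 0 m.toAdd = SemidirectProduct.inr m := rfl
  rw [hpt] at hfar
  have hfar' : (N : ℝ) - 1 ≤ K * wordDist S
      (pt Φ (act Φ N baseVec + act Φ (-N) baseVec) 0) (SemidirectProduct.inr m) := by
    exact_mod_cast hfar
  have : (K : ℝ) * wordDist S
      (pt Φ (act Φ N baseVec + act Φ (-N) baseVec) 0) (SemidirectProduct.inr m) ≤ K * R :=
    mul_le_mul_of_nonneg_left hy (by linarith)
  have := (le_max_right 1 (K * R + 1)).trans_lt hNR
  linarith

end Eigen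

/-- Let `Φ` be the automorphism of `ℤ²` given by an integer matrix `[[a, b], [c, d]]` with
`a*d - b*c = 1` and `|a + d| > 2`. Then `G = ℤ² ⋊[Φ] ℤ` contains a subgroup `H` that is
nontrivial, of infinite index, of finite height, and not strongly quasiconvex with respect
to any finite generating set of `G`. -/
theorem exists_finiteHeight_not_stronglyQuasiconvex (a b c d : ℤ)
    (h1 : a * d - b * c = 1) (h2 : 2 < |a + d|) (Φ : AddAut (Fin 2 → ℤ))
    (hΦ : ∀ v : Fin 2 → ℤ, Φ v = Matrix.mulVec !![a, b; c, d] v) :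
    ∃ H : Subgroup (Multiplicative (Fin 2 → ℤ) ⋊[zdAction Φ] Multiplicative ℤ),
      H ≠ ⊥ ∧ H.index = 0 ∧ FiniteHeight H ∧
      ∀ S : Set (Multiplicative (Fin 2 → ℤ) ⋊[zdAction Φ] Multiplicative ℤ),
        S.Finite → Subgroup.closure S = ⊤ →
          ¬ StronglyQuasiconvexIn (fun x y => (wordDist S x y : ℝ)) (H : Set _) := by
  have hc : c ≠ 0 := by
    rintro rfl
    have had : a * d = 1 := by linarith
    rcases Int.mul_eq_one_iff_eq_one_or_neg_one.1 had with ⟨rfl, rfl⟩ | ⟨rfl, rfl⟩ <;>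
      norm_num at h2
  obtain ⟨lam, hlam, habs⟩ := exists_eigenvalue (a + d) h2
  have hl0 : lam ≠ 0 := abs_pos.1 (by linarith)
  have hlam' : lam⁻¹ ^ 2 - ((a + d : ℤ) : ℝ) * lam⁻¹ + 1 = 0 := by
    field_simp
    linarith
  have hf := eigenForm_apply h1 hΦ hlam
  have hg := eigenForm_apply h1 hΦ hlam'
  refine ⟨SemidirectProduct.inr.range, ?_, index_range_inr, ⟨1, heightLE_range_inr hc habs hf hg⟩,
    fun S hfin hS => not_stronglyQuasiconvex_range_inr hfin hS hc habs hf hg⟩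
  intro hbot
  have hmem := pt_zero_mem (Φ := Φ) 1
  rw [hbot, Subgroup.mem_bot] at hmem
  have hone : (1 : ℤ) = 0 := congrArg (fun x => x.right.toAdd) hmem
  omega
end

section
/- Let X and Z be metric spaces, let f : X → Z be a quasi-isometry, and let Y be a strongly quasiconvex subset of X. Then the image f(Y) is a strongly quasiconvex subset of Z. -/
/-- `f : X → Z` is a quasi-isometry: a coarsely bi-Lipschitz, coarsely surjective map. -/
def IsQuasiIsometry {X Z : Type*} [MetricSpace X] [MetricSpace Z] (f : X → Z) : Prop :=
  ∃ K C : ℝ, 1 ≤ K ∧ 0 ≤ C ∧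
    (∀ x y : X, (1 / K) * dist x y - C ≤ dist (f x) (f y) ∧
      dist (f x) (f y) ≤ K * dist x y + C) ∧
    ∀ z : Z, ∃ x : X, dist z (f x) ≤ C

/-- The image of a strongly quasiconvex subset under a quasi-isometry is strongly
quasiconvex. -/
theorem stronglyQuasiconvex_image_quasiIsometry {X Z : Type*} [MetricSpace X]
    [MetricSpace Z] (f : X → Z) (hf : IsQuasiIsometry f) (Y : Set X)
    (hY : StronglyQuasiconvexIn (fun x y => dist x y) Y) :
    StronglyQuasiconvexIn (fun x y => dist x y) (f '' Y) := by
  obtain ⟨K, C, hK, hC, hfd, hsurj⟩ := hf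
  -- A coarse inverse of `f` that sends `f '' Y` into `Y`.
  have hg : ∀ z : Z, ∃ x : X, dist z (f x) ≤ C ∧ (z ∈ f '' Y → x ∈ Y) := by
    intro z
    by_cases hz : z ∈ f '' Y
    · obtain ⟨y, hy, rfl⟩ := hz
      exact ⟨y, by simpa using hC, fun _ => hy⟩
    · obtain ⟨x, hx⟩ := hsurj z
      exact ⟨x, hx, fun h => absurd h hz⟩
  choose g hgd hgY using hg
  intro L c hL hc
  have hK0 : 0 < K := by linarith
  have hL0 : 0 < L := by linarith
  have hKL : 1 ≤ K * L := by nlinarith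
  have hD : 0 ≤ c + 3 * C := by linarith
  obtain ⟨R, hR⟩ := hY (K * L) (K * (c + 3 * C)) hKL (mul_nonneg hK0.le hD)
  refine ⟨K * R + 2 * C, fun a b hab γ hγ ha hb s hs => ?_⟩
  have hquasi : IsQuasiGeodesicOn (fun x y : X => dist x y) (K * L) (K * (c + 3 * C)) a b
      (fun t => g (γ t)) := by
    intro s hs t ht
    obtain ⟨hlow, hup⟩ := hγ s hs t ht
    obtain ⟨hflow, hfup⟩ := hfd (g (γ s)) (g (γ t))
    have h1 := hgd (γ s)
    have h2 := hgd (γ t)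
    have h3 := dist_triangle4 (γ s) (f (g (γ s))) (f (g (γ t))) (γ t)
    have h4 := dist_triangle4 (f (g (γ s))) (γ s) (γ t) (f (g (γ t)))
    rw [dist_comm (f (g (γ t))) (γ t)] at h3
    rw [dist_comm (f (g (γ s))) (γ s)] at h4
    dsimp only at hlow hup ⊢
    constructor
    · have h5 : 1 / L * |s - t| ≤ K * dist (g (γ s)) (g (γ t)) + (c + 3 * C) := by linarith
      have h6 : 1 / (K * L) * |s - t| = (1 / L * |s - t|) / K := by field_simp
      have h7 : c + 3 * C ≤ K * (K * (c + 3 * C)) := by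
        have := mul_le_mul hK hK zero_le_one hK0.le
        nlinarith
      rw [h6, sub_le_iff_le_add, div_le_iff₀ hK0]
      linarith
    · have h5 : 1 / K * dist (g (γ s)) (g (γ t)) ≤ L * |s - t| + (c + 3 * C) := by linarith
      have h6 : dist (g (γ s)) (g (γ t)) = K * (1 / K * dist (g (γ s)) (g (γ t))) := by
        field_simp
      rw [h6]
      calc K * (1 / K * dist (g (γ s)) (g (γ t))) ≤ K * (L * |s - t| + (c + 3 * C)) := by
            gcongr
        _ = K * L * |s - t| + K * (c + 3 * C) := by ring
  obtain ⟨y, hy, hyR⟩ := hR a b hab _ hquasi (hgY _ ha) (hgY _ hb) s hs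
  refine ⟨f y, ⟨y, hy, rfl⟩, ?_⟩
  dsimp only at hyR ⊢
  calc dist (γ s) (f y) ≤ dist (γ s) (f (g (γ s))) + dist (f (g (γ s))) (f y) :=
        dist_triangle _ _ _
    _ ≤ C + (K * dist (g (γ s)) y + C) := add_le_add (hgd _) (hfd _ _).2
    _ ≤ C + (K * R + C) := by gcongr
    _ = K * R + 2 * C := by ring
end
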